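/- (Weak independence theorem for co-NSOP_1 types) Let p(x), q(x) be co-NSOP_1 partial types over M, let a ≡_M a' be tuples of realizations of p, and let b, c be tuples of realizations of q, with a ⫝^{K*}_M b, a' ⫝^{K*}_M c, and c ⫝^u_M b. Then there is a'' with a'' ⫝^{K*}_M bc and a'' ⊨ tp(a/Mb) ∪ tp(a'/Mc). -/

import Mathlib

namespace NSOP3Paper

open FirstOrder Language

universe u v w w' w₂ x y z

/-- Consistency (equivalently, by compactness over the monster model, finite
satisfiability) of a family of conditions on tuples. -/
def FamConsistent {ι : Type*} {X : Type*} (C : ι → X → Prop) : Prop :=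
  ∀ s : Finset ι, ∃ xx : X, ∀ i ∈ s, C i xx

/-- `k`-inconsistency of a family of conditions: any `k` of them (with pairwise
distinct indices) are jointly unsatisfiable. -/
def FamKInconsistent {ι : Type*} {X : Type*} (k : ℕ) (C : ι → X → Prop) : Prop :=
  ∀ s : Finset ι, s.card = k → ¬∃ xx : X, ∀ i ∈ s, C i xx

/-- Flattening of a family of tuples into a single tuple. -/
def flat {𝕄 : Type w} {ι : Type*} {β : Type*} (a : ι → β → 𝕄) : ι × β → 𝕄 :=
  fun q => a q.1 q.2

/-- A first-order `L`-formula in free variables `α`, together with a tuple of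
parameters from `𝕄`; this represents an instance `φ(x̄, b̄)`. -/
structure ParamFormula (L : FirstOrder.Language.{u, v}) (𝕄 : Type w) [L.Structure 𝕄]
    (α : Type w') where
  Params : Type
  toFormula : L.Formula (α ⊕ Params)
  params : Params → 𝕄

namespace ParamFormula

variable {L : FirstOrder.Language.{u, v}} {𝕄 : Type w} [L.Structure 𝕄] {α : Type w'}

/-- Realization of `φ(x̄, b̄)` at a tuple from `𝕄`. -/
def Realize (φ : ParamFormula L 𝕄 α) (xx : α → 𝕄) : Prop :=
  φ.toFormula.Realize (Sum.elim xx φ.params)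

/-- All parameters of `φ` lie in `A`; i.e. `φ ∈ L(A)`. -/
def ParamsIn (φ : ParamFormula L 𝕄 α) (A : Set 𝕄) : Prop :=
  ∀ i, φ.params i ∈ A

/-- Negation of a formula with parameters. -/
protected def not (φ : ParamFormula L 𝕄 α) : ParamFormula L 𝕄 α :=
  ⟨φ.Params, BoundedFormula.not φ.toFormula, φ.params⟩

/-- Substitute a tuple of elements of `𝕄` for the second group of free variables,
obtaining the instance `φ(x̄, c̄)` as a formula with parameters. -/
def subst {γ : Type} (φ : ParamFormula L 𝕄 (α ⊕ γ)) (c : γ → 𝕄) : ParamFormula L 𝕄 α :=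
  ⟨γ ⊕ φ.Params,
    (φ.toFormula).relabel (Sum.elim (Sum.map id Sum.inl) (Sum.inr ∘ Sum.inr)),
    Sum.elim c φ.params⟩

end ParamFormula

section TypesDefs

variable (L : FirstOrder.Language.{u, v}) (𝕄 : Type w) [L.Structure 𝕄]

/-- Two tuples have the same type over the parameter set `A` (written `b ≡_A b'`). -/
def TpEq (A : Set 𝕄) {β : Type w'} (b b' : β → 𝕄) : Prop :=
  ∀ φ : ParamFormula L 𝕄 β, φ.ParamsIn A → (φ.Realize b ↔ φ.Realize b')

/-- A complete global type in variables `α`: a complete, consistent set of formulas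
with parameters from the monster model `𝕄`. -/
structure GlobalType (α : Type w') where
  Mem : ParamFormula L 𝕄 α → Prop
  consistent : ∀ S : Finset (ParamFormula L 𝕄 α), (∀ φ ∈ S, Mem φ) →
    ∃ xx : α → 𝕄, ∀ φ ∈ S, φ.Realize xx
  complete : ∀ φ : ParamFormula L 𝕄 α, Mem φ ∨ Mem φ.not

/-- A sequence of tuples is indiscernible over the parameter set `A`: any two finite
increasing subtuples of the same length have the same type over `A`. -/
def IndiscernibleOver (A : Set 𝕄) {β : Type w'} (b : ℕ → β → 𝕄) : Prop :=
  ∀ (n : ℕ) (f g : Fin n → ℕ), StrictMono f → StrictMono g →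
    TpEq L 𝕄 A (fun q : Fin n × β => b (f q.1) q.2) (fun q : Fin n × β => b (g q.1) q.2)

end TypesDefs

namespace GlobalType

variable {L : FirstOrder.Language.{u, v}} {𝕄 : Type w} [L.Structure 𝕄] {α : Type w'}

/-- A global type is invariant over `A` if membership of `φ(x̄, b̄)` depends only on
the type of `b̄` over `A`. -/
def InvariantOver (p : GlobalType L 𝕄 α) (A : Set 𝕄) : Prop :=
  ∀ (P : Type) (ψ : L.Formula (α ⊕ P)) (b b' : P → 𝕄),
    TpEq L 𝕄 A b b' → (p.Mem ⟨P, ψ, b⟩ ↔ p.Mem ⟨P, ψ, b'⟩)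

/-- A global type is finitely satisfiable in `A` if each of its formulas is satisfied
by a tuple from `A`. -/
def FinSatIn (p : GlobalType L 𝕄 α) (A : Set 𝕄) : Prop :=
  ∀ φ : ParamFormula L 𝕄 α, p.Mem φ → ∃ xx : α → 𝕄, (∀ i, xx i ∈ A) ∧ φ.Realize xx

/-- `a ⊨ p|_B` : the tuple `a` realizes the restriction of the global type `p` to the
parameter set `B`. -/
def RealizesOver (p : GlobalType L 𝕄 α) (B : Set 𝕄) (a : α → 𝕄) : Prop :=
  ∀ φ : ParamFormula L 𝕄 α, p.Mem φ → φ.ParamsIn B → φ.Realize a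

/-- `(b i)` is a Morley sequence in `p` over `A`: each `b i ⊨ p|_{A b_{<i}}`. -/
def IsMorleyOver (p : GlobalType L 𝕄 α) (A : Set 𝕄) (b : ℕ → α → 𝕄) : Prop :=
  ∀ i : ℕ, p.RealizesOver (A ∪ ⋃ j ∈ Set.Iio i, Set.range (b j)) (b i)

end GlobalType

section MorleyDefs

variable (L : FirstOrder.Language.{u, v}) (𝕄 : Type w) [L.Structure 𝕄]

/-- `(b i)` is an invariant Morley sequence over `A`: a Morley sequence in some global
type invariant over `A`. -/
def IsInvMorleyOver (A : Set 𝕄) {α : Type w'} (b : ℕ → α → 𝕄) : Prop :=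
  ∃ p : GlobalType L 𝕄 α, p.InvariantOver A ∧ p.IsMorleyOver A b

/-- `(b i)` is a coheir Morley sequence over `A`: a Morley sequence in some global
type finitely satisfiable in `A`. -/
def IsCoheirMorleyOver (A : Set 𝕄) {α : Type w'} (b : ℕ → α → 𝕄) : Prop :=
  ∃ p : GlobalType L 𝕄 α, p.FinSatIn A ∧ p.IsMorleyOver A b

end MorleyDefs

namespace ParamFormula

variable {L : FirstOrder.Language.{u, v}} {𝕄 : Type w} [L.Structure 𝕄] {α : Type w'}

/-- `φ(x̄, b̄)` Kim-divides over `A`: some invariant Morley sequence over `A` starting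
with `b̄` makes the corresponding instances inconsistent. -/
def KimDividesOver (φ : ParamFormula L 𝕄 α) (A : Set 𝕄) : Prop :=
  ∃ b : ℕ → φ.Params → 𝕄, b 0 = φ.params ∧ IsInvMorleyOver L 𝕄 A b ∧
    ¬FamConsistent fun (i : ℕ) (xx : α → 𝕄) => φ.toFormula.Realize (Sum.elim xx (b i))

/-- `φ(x̄, b̄)` Conant-divides over `A`: every invariant Morley sequence over `A`
starting with `b̄` makes the corresponding instances inconsistent. -/
def ConantDividesOver (φ : ParamFormula L 𝕄 α) (A : Set 𝕄) : Prop :=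
  ∀ b : ℕ → φ.Params → 𝕄, b 0 = φ.params → IsInvMorleyOver L 𝕄 A b →
    ¬FamConsistent fun (i : ℕ) (xx : α → 𝕄) => φ.toFormula.Realize (Sum.elim xx (b i))

/-- `φ(x̄, b̄)` divides over `A`: some `A`-indiscernible sequence starting with `b̄`
makes the corresponding instances inconsistent. -/
def DividesOver (φ : ParamFormula L 𝕄 α) (A : Set 𝕄) : Prop :=
  ∃ b : ℕ → φ.Params → 𝕄, b 0 = φ.params ∧ IndiscernibleOver L 𝕄 A b ∧
    ¬FamConsistent fun (i : ℕ) (xx : α → 𝕄) => φ.toFormula.Realize (Sum.elim xx (b i))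

/-- `φ` Kim-forks over `A`: it implies a finite disjunction of formulas Kim-dividing
over `A`. -/
def KimForksOver (φ : ParamFormula L 𝕄 α) (A : Set 𝕄) : Prop :=
  ∃ (k : ℕ) (ψ : Fin k → ParamFormula L 𝕄 α), (∀ j, (ψ j).KimDividesOver A) ∧
    ∀ xx : α → 𝕄, φ.Realize xx → ∃ j, (ψ j).Realize xx

/-- `φ` Conant-forks over `A`: it implies a finite disjunction of formulas
Conant-dividing over `A`. -/
def ConantForksOver (φ : ParamFormula L 𝕄 α) (A : Set 𝕄) : Prop :=
  ∃ (k : ℕ) (ψ : Fin k → ParamFormula L 𝕄 α), (∀ j, (ψ j).ConantDividesOver A) ∧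
    ∀ xx : α → 𝕄, φ.Realize xx → ∃ j, (ψ j).Realize xx

/-- `φ` forks over `A`: it implies a finite disjunction of formulas dividing over `A`. -/
def ForksOver (φ : ParamFormula L 𝕄 α) (A : Set 𝕄) : Prop :=
  ∃ (k : ℕ) (ψ : Fin k → ParamFormula L 𝕄 α), (∀ j, (ψ j).DividesOver A) ∧
    ∀ xx : α → 𝕄, φ.Realize xx → ∃ j, (ψ j).Realize xx

end ParamFormula

section IndDefs

variable (L : FirstOrder.Language.{u, v}) (𝕄 : Type w) [L.Structure 𝕄]

/-- `a ⫝^K_A B` : `tp(a/A ∪ B)` contains no formula Kim-forking over `A`. -/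
def IndKim (A B : Set 𝕄) {γ : Type w'} (a : γ → 𝕄) : Prop :=
  ∀ φ : ParamFormula L 𝕄 γ, φ.ParamsIn (A ∪ B) → φ.Realize a → ¬φ.KimForksOver A

/-- `a ⫝^{Kd}_A B` : `tp(a/A ∪ B)` contains no formula Kim-dividing over `A`. -/
def IndKd (A B : Set 𝕄) {γ : Type w'} (a : γ → 𝕄) : Prop :=
  ∀ φ : ParamFormula L 𝕄 γ, φ.ParamsIn (A ∪ B) → φ.Realize a → ¬φ.KimDividesOver A

/-- `a ⫝^{K*}_A B` : Conant-independence. -/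
def IndConant (A B : Set 𝕄) {γ : Type w'} (a : γ → 𝕄) : Prop :=
  ∀ φ : ParamFormula L 𝕄 γ, φ.ParamsIn (A ∪ B) → φ.Realize a → ¬φ.ConantForksOver A

/-- `a ⫝^{K*d}_A B` : Conant-dividing independence. -/
def IndConantD (A B : Set 𝕄) {γ : Type w'} (a : γ → 𝕄) : Prop :=
  ∀ φ : ParamFormula L 𝕄 γ, φ.ParamsIn (A ∪ B) → φ.Realize a → ¬φ.ConantDividesOver A

/-- `a ⫝^f_A B` : forking-independence. -/
def IndForking (A B : Set 𝕄) {γ : Type w'} (a : γ → 𝕄) : Prop :=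
  ∀ φ : ParamFormula L 𝕄 γ, φ.ParamsIn (A ∪ B) → φ.Realize a → ¬φ.ForksOver A

/-- `a ⫝^i_A B` : `tp(a/A ∪ B)` extends to a global type invariant over `A`. -/
def IndInv (A B : Set 𝕄) {γ : Type w'} (a : γ → 𝕄) : Prop :=
  ∃ p : GlobalType L 𝕄 γ, p.InvariantOver A ∧
    ∀ φ : ParamFormula L 𝕄 γ, φ.ParamsIn (A ∪ B) → φ.Realize a → p.Mem φ

/-- `a ⫝^u_A B` : `tp(a/A ∪ B)` extends to a global type finitely satisfiable in `A`. -/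
def IndFinSat (A B : Set 𝕄) {γ : Type w'} (a : γ → 𝕄) : Prop :=
  ∃ p : GlobalType L 𝕄 γ, p.FinSatIn A ∧
    ∀ φ : ParamFormula L 𝕄 γ, φ.ParamsIn (A ∪ B) → φ.Realize a → p.Mem φ

/-- `a ⫝^{K+}_A b` : there is an invariant Morley sequence over `A` starting with `b`
that is indiscernible over `A ∪ a`. -/
def IndKPlus (A : Set 𝕄) {δ : Type w'} {γ : Type w₂} (b : δ → 𝕄) (a : γ → 𝕄) : Prop :=
  ∃ bs : ℕ → δ → 𝕄, bs 0 = b ∧ IsInvMorleyOver L 𝕄 A bs ∧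
    IndiscernibleOver L 𝕄 (A ∪ Set.range a) bs

/-- `a ⫝^{K+u}_A b` : there is a coheir Morley sequence over `A` starting with `b`
that is indiscernible over `A ∪ a`. -/
def IndKPlusU (A : Set 𝕄) {δ : Type w'} {γ : Type w₂} (b : δ → 𝕄) (a : γ → 𝕄) : Prop :=
  ∃ bs : ℕ → δ → 𝕄, bs 0 = b ∧ IsCoheirMorleyOver L 𝕄 A bs ∧
    IndiscernibleOver L 𝕄 (A ∪ Set.range a) bs

/-- Conant-independence `⫝^{K*}` is symmetric (over every small model). -/
def ConantSymmetric : Prop :=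
  ∀ (M : L.ElementarySubstructure 𝕄) (γ δ : Type w) (a : γ → 𝕄) (b : δ → 𝕄),
    IndConant L 𝕄 (M : Set 𝕄) (Set.range b) a → IndConant L 𝕄 (M : Set 𝕄) (Set.range a) b

/-- Conant-dividing independence `⫝^{K*d}` is symmetric. -/
def ConantDSymmetric : Prop :=
  ∀ (M : L.ElementarySubstructure 𝕄) (γ δ : Type w) (a : γ → 𝕄) (b : δ → 𝕄),
    IndConantD L 𝕄 (M : Set 𝕄) (Set.range b) a → IndConantD L 𝕄 (M : Set 𝕄) (Set.range a) b

/-- The relation `⫝^{K+}` is symmetric. -/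
def KPlusSymmetric : Prop :=
  ∀ (M : L.ElementarySubstructure 𝕄) (γ δ : Type w) (a : γ → 𝕄) (b : δ → 𝕄),
    IndKPlus L 𝕄 (M : Set 𝕄) b a → IndKPlus L 𝕄 (M : Set 𝕄) a b

/-- Forking-independence satisfies the chain condition with respect to invariant
Morley sequences. -/
def ChainConditionF : Prop :=
  ∀ (M : L.ElementarySubstructure 𝕄) (γ δ : Type w) (a : γ → 𝕄) (bs : ℕ → δ → 𝕄),
    IsInvMorleyOver L 𝕄 (M : Set 𝕄) bs →
    IndForking L 𝕄 (M : Set 𝕄) (Set.range (bs 0)) a →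
    ∃ bs' : ℕ → δ → 𝕄,
      TpEq L 𝕄 ((M : Set 𝕄) ∪ Set.range (bs 0)) (flat bs') (flat bs) ∧
      IndiscernibleOver L 𝕄 ((M : Set 𝕄) ∪ Set.range a) bs' ∧
      IndForking L 𝕄 (M : Set 𝕄) (Set.range (flat bs')) a

/-- Kim-independence satisfies the chain condition with respect to invariant Morley
sequences. -/
def ChainConditionK : Prop :=
  ∀ (M : L.ElementarySubstructure 𝕄) (γ δ : Type w) (a : γ → 𝕄) (bs : ℕ → δ → 𝕄),
    IsInvMorleyOver L 𝕄 (M : Set 𝕄) bs →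
    IndKim L 𝕄 (M : Set 𝕄) (Set.range (bs 0)) a →
    ∃ bs' : ℕ → δ → 𝕄,
      TpEq L 𝕄 ((M : Set 𝕄) ∪ Set.range (bs 0)) (flat bs') (flat bs) ∧
      IndiscernibleOver L 𝕄 ((M : Set 𝕄) ∪ Set.range a) bs' ∧
      IndKim L 𝕄 (M : Set 𝕄) (Set.range (flat bs')) a

/-- `T` is NSOP₃: there is no definable binary relation on tuples with no 3-cycles
containing an infinite chain. -/
def IsNSOP3 : Prop :=
  ¬∃ (m : ℕ) (R : ParamFormula L 𝕄 (Fin m ⊕ Fin m)) (a : ℕ → Fin m → 𝕄),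
    (∀ i j : ℕ, i < j → R.Realize (Sum.elim (a i) (a j))) ∧
    ¬∃ x1 x2 x3 : Fin m → 𝕄,
      R.Realize (Sum.elim x1 x2) ∧ R.Realize (Sum.elim x2 x3) ∧ R.Realize (Sum.elim x3 x1)

/-- `𝕄` is a `κ`-monster: every consistent type in fewer than `κ` variables over a
parameter set of size less than `κ` is realized. -/
class IsMonster (κ : Cardinal.{w}) : Prop where
  saturated : ∀ {α : Type w} (A : Set 𝕄) (S : Set (ParamFormula L 𝕄 α)),
    Cardinal.mk α < κ → Cardinal.mk A < κ → (∀ φ ∈ S, φ.ParamsIn A) →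
    (∀ S₀ : Finset (ParamFormula L 𝕄 α), (∀ φ ∈ S₀, φ ∈ S) →
      ∃ xx : α → 𝕄, ∀ φ ∈ S₀, φ.Realize xx) →
    ∃ xx : α → 𝕄, ∀ φ ∈ S, φ.Realize xx

/-- A tuple realizes the partial type `P`. -/
def RealizesPType {nv : ℕ} (P : Set (ParamFormula L 𝕄 (Fin nv))) (a : Fin nv → 𝕄) : Prop :=
  ∀ φ ∈ P, φ.Realize a

/-- `p(x̄)` is co-NSOP₁: no `L(M)`-formula `φ(x̄, ȳ)` and tree of tuples of
realizations of `p` witness SOP₁-style consistency/inconsistency. -/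
def CoNSOP1 (M : Set 𝕄) {nv : ℕ} (P : Set (ParamFormula L 𝕄 (Fin nv))) : Prop :=
  ¬∃ (k m : ℕ) (φ : ParamFormula L 𝕄 (Fin k ⊕ (Fin m × Fin nv)))
      (b : List Bool → Fin m → Fin nv → 𝕄),
    φ.ParamsIn M ∧
    (∀ η j, RealizesPType L 𝕄 P (b η j)) ∧
    (∀ σ : ℕ → Bool, FamConsistent fun (n : ℕ) (xx : Fin k → 𝕄) =>
      (φ.subst (flat (b (List.ofFn fun i : Fin n => σ i)))).Realize xx) ∧
    (∀ η₁ η₂ : List Bool, (η₁ ++ [false]) <+: η₂ →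
      ¬∃ xx : Fin k → 𝕄, (φ.subst (flat (b η₂))).Realize xx ∧
        (φ.subst (flat (b (η₁ ++ [true])))).Realize xx)

/-- The set of realizations of the partial type `P`. -/
def PRealizations {nv : ℕ} (P : Set (ParamFormula L 𝕄 (Fin nv))) : Type w :=
  { a : Fin nv → 𝕄 // RealizesPType L 𝕄 P a }

/-- The language `L_p` associated to a partial `nv`-type: an `m`-ary relation symbol
for each `L(M)`-formula in `m` groups of `nv` variables. -/
def pLang (M : Set 𝕄) (nv : ℕ) : Language :=
  ⟨fun _ => Empty, fun m => { φ : ParamFormula L 𝕄 (Fin m × Fin nv) // φ.ParamsIn M }⟩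

/-- The structure `M_p` on the set of realizations of `p`, with relations interpreted
by the corresponding formulas in `𝕄`. -/
instance pStruct (M : Set 𝕄) {nv : ℕ} (P : Set (ParamFormula L 𝕄 (Fin nv))) :
    (pLang L 𝕄 M nv).Structure (PRealizations L 𝕄 P) where
  funMap := fun {n} f _ => f.elim
  RelMap := fun {m} R xs => R.1.Realize fun q : Fin m × Fin nv => (xs q.1).1 q.2

end IndDefs

/-- An SOP₁ pattern witnessed inside the structure `W`. -/
def SOP1PatternIn (L' : FirstOrder.Language.{x, y}) (W : Type z) [L'.Structure W] : Prop :=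
  ∃ (k n : ℕ) (φ : L'.Formula (Fin k ⊕ Fin n)) (bt : List Bool → Fin n → W),
    (∀ σ : ℕ → Bool, FamConsistent fun (i : ℕ) (xx : Fin k → W) =>
      φ.Realize (Sum.elim xx (bt (List.ofFn fun j : Fin i => σ j)))) ∧
    (∀ η₁ η₂ : List Bool, (η₁ ++ [false]) <+: η₂ →
      ¬∃ xx : Fin k → W, φ.Realize (Sum.elim xx (bt η₂)) ∧
        φ.Realize (Sum.elim xx (bt (η₁ ++ [true]))))

/-- The complete theory of `N` is NSOP₁: no SOP₁ pattern in any elementarily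
equivalent structure. -/
def IsNSOP1Th (L' : FirstOrder.Language.{x, y}) (N : Type z) [L'.Structure N] : Prop :=
  ¬∃ (W : Type (max x y z)) (S : L'.Structure W),
    L'.completeTheory N = @Language.completeTheory L' W S ∧ @SOP1PatternIn L' W S

/-- The formula `φ(x̄, ȳ)` has the tree property, witnessed in `W`. -/
def FormulaTPIn (L' : FirstOrder.Language.{x, y}) (W : Type z) [L'.Structure W]
    {k n : ℕ} (φ : L'.Formula (Fin k ⊕ Fin n)) : Prop :=
  ∃ (kk : ℕ) (bt : List ℕ → Fin n → W),
    (∀ σ : ℕ → ℕ, FamConsistent fun (i : ℕ) (xx : Fin k → W) =>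
      φ.Realize (Sum.elim xx (bt (List.ofFn fun j : Fin i => σ j)))) ∧
    (∀ η : List ℕ, FamKInconsistent kk fun (j : ℕ) (xx : Fin k → W) =>
      φ.Realize (Sum.elim xx (bt (η ++ [j]))))

/-- The formula `φ(x̄, ȳ)` has SOP₁, witnessed in `W`. -/
def FormulaSOP1In (L' : FirstOrder.Language.{x, y}) (W : Type z) [L'.Structure W]
    {k n : ℕ} (φ : L'.Formula (Fin k ⊕ Fin n)) : Prop :=
  ∃ bt : List Bool → Fin n → W,
    (∀ σ : ℕ → Bool, FamConsistent fun (i : ℕ) (xx : Fin k → W) =>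
      φ.Realize (Sum.elim xx (bt (List.ofFn fun j : Fin i => σ j)))) ∧
    (∀ η₁ η₂ : List Bool, (η₁ ++ [false]) <+: η₂ →
      ¬∃ xx : Fin k → W, φ.Realize (Sum.elim xx (bt η₂)) ∧
        φ.Realize (Sum.elim xx (bt (η₁ ++ [true]))))

/-- Longest common prefix (meet in the tree `2^{<ω}`). -/
def meet : List Bool → List Bool → List Bool
  | a :: as, b :: bs => if a = b then a :: meet as bs else []
  | _, _ => []

/-- Strict tree order (strict prefix) on `2^{<ω}`. -/
def StrictPrefix (η ν : List Bool) : Prop := η <+: ν ∧ η ≠ ν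

/-- Lexicographic order on `2^{<ω}`. -/
def LexLt (η ν : List Bool) : Prop :=
  StrictPrefix η ν ∨ ((meet η ν ++ [false]) <+: η ∧ (meet η ν ++ [true]) <+: ν)

/-- The meet `c 0 ∧ … ∧ c k`. -/
def meetInit (c : ℕ → List Bool) : ℕ → List Bool
  | 0 => c 0
  | k + 1 => meet (meetInit c k) (c (k + 1))

/-- `c 0, …, c (l-1)` is a descending comb: a lexicographically increasing antichain
whose successive meets form a strictly descending chain in the tree order. -/
def IsDescendingComb (l : ℕ) (c : ℕ → List Bool) : Prop :=
  (∀ i j, i < l → j < l → i ≠ j → ¬(c i <+: c j)) ∧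
  (∀ i j, i < j → j < l → LexLt (c i) (c j)) ∧
  (∀ k, k + 1 < l → StrictPrefix (meetInit c (k + 1)) (meetInit c k))

section DCTP

variable (L : FirstOrder.Language.{u, v}) (𝕄 : Type w) [L.Structure 𝕄]

/-- `T` has `k`-DCTP₂. -/
def HasKDCTP2 (k : ℕ) : Prop :=
  ∃ (kx ny : ℕ) (φ : ParamFormula L 𝕄 (Fin kx ⊕ Fin ny)) (b : List Bool → Fin ny → 𝕄),
    (∀ σ : ℕ → Bool, FamKInconsistent k fun (n : ℕ) (xx : Fin kx → 𝕄) =>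
      (φ.subst (b (List.ofFn fun i : Fin n => σ i))).Realize xx) ∧
    (∀ (l : ℕ) (c : ℕ → List Bool), IsDescendingComb l c →
      ∃ xx : Fin kx → 𝕄, ∀ i < l, (φ.subst (b (c i))).Realize xx)

/-- `T` is N-ω-DCTP₂: it does not have `k`-DCTP₂ for any `k`. -/
def NOmegaDCTP2 : Prop := ∀ k : ℕ, ¬HasKDCTP2 L 𝕄 k

/-- A generic triple of sets of realizations of three partial types: the three sets
begin mutually indiscernible invariant Morley sequences over `M`. -/
def GenericTriple (M : Set 𝕄) {ι₁ ι₂ ι₃ : Type w} {nv₁ nv₂ nv₃ : ℕ}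
    (A : ι₁ → Fin nv₁ → 𝕄) (B : ι₂ → Fin nv₂ → 𝕄) (C : ι₃ → Fin nv₃ → 𝕄) : Prop :=
  ∃ (IA : ℕ → ι₁ → Fin nv₁ → 𝕄) (IB : ℕ → ι₂ → Fin nv₂ → 𝕄) (IC : ℕ → ι₃ → Fin nv₃ → 𝕄),
    IA 0 = A ∧ IB 0 = B ∧ IC 0 = C ∧
    IsInvMorleyOver L 𝕄 M (fun i => flat (IA i)) ∧
    IsInvMorleyOver L 𝕄 M (fun i => flat (IB i)) ∧
    IsInvMorleyOver L 𝕄 M (fun i => flat (IC i)) ∧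
    IndiscernibleOver L 𝕄
      (M ∪ Set.range (flat fun i => flat (IB i)) ∪ Set.range (flat fun i => flat (IC i)))
      (fun i => flat (IA i)) ∧
    IndiscernibleOver L 𝕄
      (M ∪ Set.range (flat fun i => flat (IA i)) ∪ Set.range (flat fun i => flat (IC i)))
      (fun i => flat (IB i)) ∧
    IndiscernibleOver L 𝕄
      (M ∪ Set.range (flat fun i => flat (IA i)) ∪ Set.range (flat fun i => flat (IB i)))
      (fun i => flat (IC i))

end DCTP

/-- The language of hypergraph sequences: one `n`-ary relation symbol for each `n`. -/
def hgLang : FirstOrder.Language.{0, 0} := ⟨fun _ => Empty, fun _ => PUnit⟩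

section Hypergraph

variable (V : Type z) [hgLang.Structure V]

/-- The `n`-ary edge relation of a hypergraph sequence. -/
def hgRel {n : ℕ} (v : Fin n → V) : Prop :=
  @Structure.RelMap hgLang V _ n PUnit.unit v

/-- A family of vertices is a clique: every tuple of its members is an edge. -/
def IsClique {ι : Type*} (a : ι → V) : Prop :=
  ∀ (n : ℕ) (f : Fin n → ι), hgRel V fun j => a (f j)

/-- A family of vertices is a `k`-anticlique: no `k`-tuple of its members (with
pairwise distinct indices) is an edge. -/
def IsAnticlique (k : ℕ) {ι : Type*} (a : ι → V) : Prop :=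
  ∀ f : Fin k → ι, Function.Injective f → ¬hgRel V fun j => a (f j)

/-- The hypergraph sequence has MTP. -/
def HasMTP : Prop :=
  ∃ (k : ℕ) (bt : List ℕ → V),
    (∀ σ : ℕ → ℕ, IsClique V fun n : ℕ => bt (List.ofFn fun j : Fin n => σ j)) ∧
    (∀ η : List ℕ, IsAnticlique V k fun n : ℕ => bt (η ++ [n]))

/-- The hypergraph sequence has an `(ω, ω, 1)`-array. -/
def HasOmegaArray : Prop :=
  ∃ (k : ℕ) (bt : ℕ → ℕ → V),
    (∀ i : ℕ, IsClique V (bt i)) ∧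
    (∀ σ : ℕ → ℕ, IsAnticlique V k fun i : ℕ => bt i (σ i))

/-- The hypergraph sequence has MSOP₁. -/
def HasMSOP1 : Prop :=
  ∃ bt : List Bool → V,
    (∀ σ : ℕ → Bool, IsClique V fun n : ℕ => bt (List.ofFn fun j : Fin n => σ j)) ∧
    (∀ η₁ η₂ : List Bool, (η₁ ++ [false]) <+: η₂ →
      IsAnticlique V 2 ![bt η₂, bt (η₁ ++ [true])])

/-- The hypergraph sequence has ω-MDCTP₂. -/
def HasOmegaMDCTP2 : Prop :=
  ∃ (k : ℕ) (bt : List Bool → V),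
    (∀ σ : ℕ → Bool, IsAnticlique V k fun n : ℕ => bt (List.ofFn fun j : Fin n => σ j)) ∧
    (∀ (l : ℕ) (c : ℕ → List Bool), IsDescendingComb l c →
      IsClique V fun i : Fin l => bt (c i))

/-- The hypergraph sequence has the compatible order property. -/
def HasCompatibleOrderProperty : Prop :=
  ∃ c d : ℕ → V,
    (∀ m n : ℕ, m < n →
      IsClique V fun i : Fin (n + 1) => if (i : ℕ) ≤ m then d i else c i) ∧
    (∀ m n : ℕ, m < n → ¬hgRel V ![c m, d n])

end Hypergraph

/-!
Global types are represented by ultrafilters on tuples. Suppose a condition is consistent along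
the Morley sequences of one invariant extension of `tp(b/M)` but not along those of another.
Interleaving the two types yields trees of conjugates of `b` whose paths are Morley in the first
type and whose combs (right siblings of the left turns of a path) are Morley in the second, and a
Ramsey argument extracts an SOP₁ tree from them. For realizations of a co-NSOP₁ type this is
impossible, so consistency along Morley sequences does not depend on the invariant extension, and
Conant-independence of `a` from `b` means that every condition on `b` met by `a` is consistent
along all of them. The same comb trees make this relation symmetric.

For the amalgamation, symmetry moves `b` and `c` to `b₁` and `c₁`, each in constant type over `M`
with the terms of one coheir Morley sequence of `a`. A limit `a₁` of this sequence is independent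
from `b₁c₁`. Let `d` be a Morley sequence of `b₁c₁` in a coheir extending that of `c` over `Mb`,
and choose `a₀` with `a₀d_n ≡ a₁b₁c₁` for all `n`. The `b`-part of `d_{2n}` together with the
`c`-part of `d_{2n+1}` has the type of `bc` over `M`, and these pairs form a Morley sequence
again; `a₀` is independent from a limit of them, which is conjugate to `bc`.
-/

/-! ### Comb trees and SOP₁ trees -/

section Combinatorics

open scoped List

variable {A : Type*} {Cons : List A → Prop}

/-- An abstract notion of consistency for finite lists of conditions: it is inherited by lists with
fewer entries, regardless of order and repetitions. -/
def SubsetClosed (Cons : List A → Prop) : Prop :=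
  ∀ ⦃l l' : List A⦄, l ⊆ l' → Cons l' → Cons l

/-- Consistency together with the conditions in the fixed list `E`. -/
def localize (Cons : List A → Prop) (E : List A) : List A → Prop :=
  fun l => Cons (l ++ E)

theorem SubsetClosed.localize (hC : SubsetClosed Cons) (E : List A) :
    SubsetClosed (localize Cons E) := fun l l' hl => by
  refine hC fun y hy => ?_
  grind

theorem localize_nil : localize Cons [] = Cons :=
  funext fun l => by rw [localize, List.append_nil]

theorem localize_localize (E F : List A) :
    localize (localize Cons E) F = localize Cons (F ++ E) :=
  funext fun l => by simp only [localize, List.append_assoc]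

/-- A binary tree of height `n` hanging below a branch, where `S` lists the conditions on the branch
and `X` those at the right siblings of its left turns: every leaf extends the branch to a consistent
one and has no `k` consistent right siblings of left turns. Nodes are listed from the leaf to the
root. -/
def CombTree (Cons : List A → Prop) (k : ℕ) : ℕ → List A → List A → Prop
  | 0, S, X => Cons S ∧ ∀ Y, Y <+ X → Y.length = k → ¬Cons Y
  | n + 1, S, X => ∃ d₀ d₁, CombTree Cons k n (d₀ :: S) (d₁ :: X) ∧ CombTree Cons k n (d₁ :: S) X

/-- A binary tree of height `h` whose nodes carry blocks of `K` conditions, hanging below a branch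
with conditions `S`: branches are consistent, and a block is inconsistent with every block in `X`
and with every block that is the right sibling of a left turn above it. -/
def BlockTree (Cons : List A → Prop) (K : ℕ) : ℕ → List A → List (List A) → Prop
  | 0, S, _ => Cons S
  | h + 1, S, X => ∃ D₀ D₁ : List A, D₀.length = K ∧ D₁.length = K ∧
      (∀ x ∈ D₁ :: X, ¬Cons (x ++ D₀)) ∧ (∀ x ∈ X, ¬Cons (x ++ D₁)) ∧
      BlockTree Cons K h (D₀ ++ S) (D₁ :: X) ∧ BlockTree Cons K h (D₁ ++ S) X

theorem CombTree.mono (hC : SubsetClosed Cons) {k n : ℕ} {S X S' X' : List A} (hS : S' ⊆ S)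
    (hX : X' <+ X) (h : CombTree Cons k n S X) : CombTree Cons k n S' X' := by
  induction n generalizing S X S' X' with
  | zero => exact ⟨hC hS h.1, fun Y hY => h.2 Y (hY.trans hX)⟩
  | succ n ih =>
    obtain ⟨d₀, d₁, h₀, h₁⟩ := h
    exact ⟨d₀, d₁, ih (List.cons_subset_cons _ hS) (hX.cons_cons _) h₀,
      ih (List.cons_subset_cons _ hS) hX h₁⟩

theorem CombTree.of_le (hC : SubsetClosed Cons) {k m n : ℕ} {S X : List A} (hmn : m ≤ n)
    (h : CombTree Cons k n S X) : CombTree Cons k m S X := by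
  induction hmn with
  | refl => exact h
  | step _ ih =>
    obtain ⟨d₀, d₁, h₀, -⟩ := h
    exact ih (h₀.mono hC (List.subset_cons_self _ _) (List.sublist_cons_self _ _))

theorem BlockTree.mono (hC : SubsetClosed Cons) {K h : ℕ} {S S' : List A} {X X' : List (List A)}
    (hS : S' ⊆ S) (hX : ∀ x' ∈ X', ∃ x ∈ X, x ⊆ x') (hT : BlockTree Cons K h S X) :
    BlockTree Cons K h S' X' := by
  induction h generalizing S S' X X' with
  | zero => exact hC hS hT
  | succ h ih =>
    obtain ⟨D₀, D₁, hD₀, hD₁, hX₀, hX₁, h₀, h₁⟩ := hT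
    have hX' : ∀ x' ∈ D₁ :: X', ∃ x ∈ D₁ :: X, x ⊆ x' := by
      intro x' hx'
      rcases List.mem_cons.1 hx' with rfl | hx'
      · exact ⟨x', by simp, List.Subset.refl _⟩
      · obtain ⟨x, hx, hxx'⟩ := hX x' hx'
        exact ⟨x, by simp [hx], hxx'⟩
    refine ⟨D₀, D₁, hD₀, hD₁, fun x' hx' hc => ?_, fun x' hx' hc => ?_,
      ih (by grind) hX' h₀,
      ih (by grind) hX h₁⟩
    · obtain ⟨x, hx, hxx'⟩ := hX' x' hx'
      exact hX₀ x hx (hC (by grind) hc)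
    · obtain ⟨x, hx, hxx'⟩ := hX x' hx'
      exact hX₁ x hx (hC (by grind) hc)

theorem BlockTree.of_localize (hC : SubsetClosed Cons) {E : List A} {K h : ℕ} {S : List A}
    {X : List (List A)} (hT : BlockTree (localize Cons E) K h S X) :
    BlockTree Cons (K + E.length) h (S ++ E) (X.map (· ++ E)) := by
  induction h generalizing S X with
  | zero => exact hT
  | succ h ih =>
    obtain ⟨D₀, D₁, hD₀, hD₁, hX₀, hX₁, h₀, h₁⟩ := hT
    have absorb : ∀ x D : List A, Cons ((x ++ E) ++ (D ++ E)) → localize Cons E (x ++ D) :=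
      fun x D => hC (by grind)
    refine ⟨D₀ ++ E, D₁ ++ E, by simp [hD₀], by simp [hD₁], ?_, ?_,
      (ih h₀).mono hC (by grind) fun x hx => ⟨x, hx, List.Subset.refl _⟩,
      (ih h₁).mono hC (by grind) fun x hx => ⟨x, hx, List.Subset.refl _⟩⟩
    · rw [← List.map_cons (f := (· ++ E)), List.forall_mem_map]
      exact fun x hx hc => hX₀ x hx (absorb x D₀ hc)
    · rw [List.forall_mem_map]
      exact fun x hx hc => hX₁ x hx (absorb x D₁ hc)

-- Along the leftmost path, two of the first `card C + 1` right siblings receive the same colour;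
-- `unseen` bounds the colours that have not occurred so far.
theorem CombTree.exists_monochromatic_of_unseen (hC : SubsetClosed Cons) {C : Type*}
    (col : A → C) {k m c : ℕ} {S X : List A} (unseen : Finset C) {S' X' : List A}
    (hcard : unseen.card ≤ c) (hseen : ∀ i ∉ unseen, ∃ e, col e = i ∧ e :: X <+ X')
    (hS : S ⊆ S') (hX : X <+ X') (h : CombTree Cons k (c + 1 + m) S' X') :
    ∃ e e', col e = col e' ∧ CombTree Cons k m (e' :: S) (e :: X) := by
  classical
  induction c generalizing unseen S' X' with
  | zero =>
    rw [show 0 + 1 + m = m + 1 by omega] at h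
    obtain ⟨_, d₁, -, h₁⟩ := h
    obtain ⟨e, he, hex⟩ := hseen (col d₁) (by simp [Finset.card_eq_zero.1 (Nat.le_zero.1 hcard)])
    exact ⟨e, d₁, he, h₁.mono hC (List.cons_subset_cons _ hS) hex⟩
  | succ c ih =>
    rw [show c + 1 + 1 + m = (c + 1 + m) + 1 by omega] at h
    obtain ⟨d₀, d₁, h₀, h₁⟩ := h
    by_cases hd : col d₁ ∈ unseen
    · refine ih (unseen.erase (col d₁)) (by rw [Finset.card_erase_of_mem hd]; omega) ?_
        (fun y hy => List.mem_cons_of_mem _ (hS hy)) (hX.trans (List.sublist_cons_self _ _)) h₀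
      intro i hi
      by_cases hid : i = col d₁
      · exact ⟨d₁, hid.symm, hX.cons_cons _⟩
      · obtain ⟨e, he, hex⟩ := hseen i fun h => hi (Finset.mem_erase.2 ⟨hid, h⟩)
        exact ⟨e, he, hex.trans (List.sublist_cons_self _ _)⟩
    · obtain ⟨e, he, hex⟩ := hseen _ hd
      exact ⟨e, d₁, he, (h₁.of_le hC (by omega)).mono hC (List.cons_subset_cons _ hS) hex⟩

theorem CombTree.exists_monochromatic (hC : SubsetClosed Cons) {C : Type*} [Fintype C]
    (col : A → C) {k m : ℕ} {S X : List A} (h : CombTree Cons k (Fintype.card C + 1 + m) S X) :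
    ∃ e e', col e = col e' ∧ CombTree Cons k m (e' :: S) (e :: X) := by
  classical
  exact exists_monochromatic_of_unseen hC col Finset.univ le_rfl
    (fun i hi => absurd (Finset.mem_univ i) hi) (List.Subset.refl S) (List.Sublist.refl X) h

/-- An array of pairs, listed from the last row to the first, in which the colour of an entry over
any choice of earlier rows does not depend on the column. -/
def ColumnBlind {C : Type*} (col : List (A × A) → A → C) : List (A × A) → Prop
  | [] => True
  | p :: H => ColumnBlind col H ∧ ∀ Z, Z <+ H → col Z p.1 = col Z p.2

theorem ColumnBlind.sublist {C : Type*} {col : List (A × A) → A → C} {H H' : List (A × A)}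
    (hsub : H' <+ H) (hH : ColumnBlind col H) : ColumnBlind col H' := by
  induction hsub with
  | slnil => exact hH
  | cons _ _ ih => exact ih hH.1
  | cons_cons _ hsub ih => exact ⟨ih hH.1, fun Z hZ => hH.2 Z (hZ.trans hsub)⟩

theorem exists_columnBlind (C : Type*) [Finite C] (q : ℕ) : ∃ n, ∀ {Cons : List A → Prop} {k : ℕ},
    SubsetClosed Cons → CombTree Cons k n [] [] → ∀ col : List (A × A) → A → C,
    ∃ H : List (A × A), H.length = q ∧ ColumnBlind col H ∧
      CombTree Cons k 0 (H.map Prod.fst) (H.map Prod.snd) := by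
  suffices h : ∀ m, ∃ n, ∀ {Cons : List A → Prop} {k : ℕ}, SubsetClosed Cons →
      CombTree Cons k n [] [] → ∀ col : List (A × A) → A → C,
      ∃ H : List (A × A), H.length = q ∧ ColumnBlind col H ∧
        CombTree Cons k m (H.map Prod.fst) (H.map Prod.snd) from h 0
  classical
  have := Fintype.ofFinite C
  induction q with
  | zero => exact fun m => ⟨m, fun _ h _ => ⟨[], rfl, trivial, h⟩⟩
  | succ q ih =>
    intro m
    obtain ⟨n, hn⟩ := ih (Fintype.card (Fin (2 ^ q) → C) + 1 + m)
    refine ⟨n, fun hC h col => ?_⟩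
    obtain ⟨H, hq, hblind, hH⟩ := hn hC h col
    obtain ⟨e, e', hee', h'⟩ := hH.exists_monochromatic hC
      fun c (j : Fin (2 ^ q)) => col (H.sublists.getD j []) c
    refine ⟨(e', e) :: H, by simp [hq], ⟨hblind, fun Z hZ => ?_⟩, h'⟩
    obtain ⟨j, hj, hjZ⟩ := List.getElem_of_mem (List.mem_sublists.2 hZ)
    have := congrFun hee' ⟨j, by rwa [List.length_sublists, hq] at hj⟩
    simpa only [List.getD_eq_getElem _ _ hj, hjZ] using this.symm

/-- A list in which, for each entry `x`, either all or none of the `r`-element sublists `t` of the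
rest satisfy `R (x :: t)`. -/
def Prehomogeneous (R : List A → Prop) (r : ℕ) : List A → Prop
  | [] => True
  | x :: l => ((∀ t, t <+ l → t.length = r → R (x :: t)) ∨
      (∀ t, t <+ l → t.length = r → ¬R (x :: t))) ∧ Prehomogeneous R r l

theorem forall_sublist_cons_of_forall {R : List A → Prop} {r : ℕ} {x : A} {l : List A}
    (hx : ∀ t, t <+ l → t.length = r → R (x :: t)) (hl : ∀ t, t <+ l → t.length = r + 1 → R t) :
    ∀ t, t <+ x :: l → t.length = r + 1 → R t := by
  intro t ht htr
  cases ht with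
  | cons _ ht => exact hl t ht htr
  | cons_cons _ ht => exact hx _ ht (by simpa using htr)

theorem Prehomogeneous.exists_homogeneous {R : List A → Prop} {r : ℕ} {l : List A}
    (hl : Prehomogeneous R r l) {q₁ q₂ : ℕ} (hq : q₁ + q₂ ≤ l.length) :
    ∃ l', l' <+ l ∧ ((l'.length = q₁ ∧ ∀ t, t <+ l' → t.length = r + 1 → R t) ∨
      (l'.length = q₂ ∧ ∀ t, t <+ l' → t.length = r + 1 → ¬R t)) := by
  induction l generalizing q₁ q₂ with
  | nil =>
    obtain rfl : q₁ = 0 := by simp only [List.length_nil] at hq; omega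
    exact ⟨[], List.Sublist.refl _, .inl ⟨rfl, fun t ht htr => by simp_all⟩⟩
  | cons x l ih =>
    obtain ⟨hx | hx, hl⟩ := hl
    · cases q₁ with
      | zero => exact ⟨[], List.nil_sublist _, .inl ⟨rfl, fun t ht htr => by simp_all⟩⟩
      | succ q₁ =>
        obtain ⟨l', hl', h | h⟩ := ih hl (q₁ := q₁) (q₂ := q₂) (by grind)
        · exact ⟨x :: l', hl'.cons_cons _, .inl ⟨by simp [h.1],
            forall_sublist_cons_of_forall (fun t ht => hx t (ht.trans hl')) h.2⟩⟩
        · exact ⟨l', hl'.cons _, .inr h⟩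
    · cases q₂ with
      | zero => exact ⟨[], List.nil_sublist _, .inr ⟨rfl, fun t ht htr => by simp_all⟩⟩
      | succ q₂ =>
        obtain ⟨l', hl', h | h⟩ := ih hl (q₁ := q₁) (q₂ := q₂) (by grind)
        · exact ⟨l', hl'.cons _, .inl h⟩
        · exact ⟨x :: l', hl'.cons_cons _, .inr ⟨by simp [h.1],
            forall_sublist_cons_of_forall (R := fun t => ¬R t)
              (fun t ht => hx t (ht.trans hl')) h.2⟩⟩

theorem exists_prehomogeneous {r : ℕ} (ramsey : ∀ q, ∃ n, ∀ (R : List A → Prop) (l : List A),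
      n ≤ l.length → ∃ l', l' <+ l ∧ l'.length = q ∧
        ((∀ t, t <+ l' → t.length = r → R t) ∨ (∀ t, t <+ l' → t.length = r → ¬R t))) (m : ℕ) :
    ∃ n, ∀ (R : List A → Prop) (l : List A), n ≤ l.length →
      ∃ l', l' <+ l ∧ l'.length = m ∧ Prehomogeneous R r l' := by
  induction m with
  | zero => exact ⟨0, fun R l _ => ⟨[], List.nil_sublist _, rfl, trivial⟩⟩
  | succ m ih =>
    obtain ⟨n₁, h₁⟩ := ih
    obtain ⟨n₂, h₂⟩ := ramsey n₁
    refine ⟨n₂ + 1, fun R l hl => ?_⟩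
    obtain ⟨x, l, rfl⟩ := List.exists_cons_of_length_pos (by omega : 0 < l.length)
    obtain ⟨l₁, hl₁, hn₁, hR⟩ := h₂ (fun t => R (x :: t)) l (by simpa using hl)
    obtain ⟨l₂, hl₂, hn₂, hp⟩ := h₁ R l₁ hn₁.ge
    exact ⟨x :: l₂, (hl₂.trans hl₁).cons_cons _, by simp [hn₂],
      hR.imp (fun h t ht => h t (ht.trans hl₂)) (fun h t ht => h t (ht.trans hl₂)), hp⟩

theorem exists_homogeneous_sublist (r : ℕ) : ∀ q, ∃ n, ∀ (R : List A → Prop) (l : List A),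
    n ≤ l.length → ∃ l', l' <+ l ∧ l'.length = q ∧
      ((∀ t, t <+ l' → t.length = r → R t) ∨ (∀ t, t <+ l' → t.length = r → ¬R t)) := by
  induction r with
  | zero =>
    refine fun q => ⟨q, fun R l hl => ⟨l.take q, List.take_sublist _ _, by simp [hl], ?_⟩⟩
    exact (em (R [])).imp (fun h t _ ht => List.length_eq_zero_iff.1 ht ▸ h)
      (fun h t _ ht => List.length_eq_zero_iff.1 ht ▸ h)
  | succ r ih =>
    intro q
    obtain ⟨n, hn⟩ := exists_prehomogeneous ih (q + q)
    refine ⟨n, fun R l hl => ?_⟩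
    obtain ⟨l', hl', hlen, hp⟩ := hn R l hl
    obtain ⟨l'', hl'', h | h⟩ := hp.exists_homogeneous hlen.ge
    · exact ⟨l'', hl''.trans hl', h.1, .inl h.2⟩
    · exact ⟨l'', hl''.trans hl', h.1, .inr h.2⟩

/-- The entry `c` begins a block of length `N + 1` which is inconsistent with all blocks in `X`
and above which there is a block tree of height `h`. -/
def BeginsBlock (Cons : List A → Prop) (N h : ℕ) (S : List A) (X : List (List A)) (c : A) : Prop :=
  ∃ w : List A, w.length = N ∧ (∀ x ∈ X, ¬Cons (x ++ c :: w)) ∧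
    BlockTree Cons (N + 1) h (c :: w ++ S) X

theorem exists_eq_concat_of_length {l : List A} {n : ℕ} (hl : l.length = n + 1) :
    ∃ l' a, l = l' ++ [a] ∧ l'.length = n := by
  have hne : l ≠ [] := by rintro rfl; simp at hl
  exact ⟨l.dropLast, l.getLast hne, (List.dropLast_append_getLast hne).symm, by simp [hl]⟩

theorem exists_eq_append_append_concat {l : List A} {m n : ℕ} (hl : l.length = m + n + 1) :
    ∃ l₀ l₁ a, l = l₀ ++ (l₁ ++ [a]) ∧ l₀.length = m ∧ l₁.length = n := by
  obtain ⟨l', a, rfl, hl'⟩ := exists_eq_concat_of_length hl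
  exact ⟨l'.take m, l'.drop m, a, by simp [← List.append_assoc], by simp [hl'], by simp [hl']⟩

-- The left block of the tree over `Z` consists of the next `N + 1` entries of the first column.
-- Replacing the lowest of them by its partner in the second column gives an entry inconsistent with
-- the left block, and by `hblind` it begins another block with the same properties.
theorem blockTree_of_inconsistent (hC : SubsetClosed Cons) {N h : ℕ} {H : List (A × A)}
    (hinc : ∀ l p, l ++ [p] <+ H → l.length = N → ¬Cons (p.2 :: l.map Prod.fst))
    (hfst : Cons (H.map Prod.fst))
    (hblind : ∀ p Z, p :: Z <+ H → ∀ j < h,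
      BeginsBlock Cons N j (Z.map Prod.fst) (Z.map fun q => [q.2]) p.1 →
      BeginsBlock Cons N j (Z.map Prod.fst) (Z.map fun q => [q.2]) p.2)
    {j : ℕ} (hj : j ≤ h) {L Z : List (A × A)} (hH : H = L ++ Z) (hL : L.length = j * (N + 1)) :
    BlockTree Cons (N + 1) j (Z.map Prod.fst) (Z.map fun q => [q.2]) := by
  induction j generalizing L Z with
  | zero =>
    obtain rfl : L = [] := List.length_eq_zero_iff.1 (by simpa using hL)
    simpa [hH, BlockTree] using hfst
  | succ j ih =>
    obtain ⟨L, W, p, rfl, hL, hW⟩ := exists_eq_append_append_concat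
      (show L.length = j * (N + 1) + N + 1 by rw [hL]; ring)
    have hT := ih (by omega) (Z := W ++ p :: Z) (by simp [hH]) hL
    rw [List.map_append, List.map_append, List.map_cons, List.map_cons] at hT
    have hinc_left : ∀ z ∈ p :: Z, ¬Cons ([z.2] ++ p.1 :: W.map Prod.fst) := fun z hz hc => by
      have hsub : W ++ [z] <+ H := by
        rw [hH, show L ++ (W ++ [p]) ++ Z = L ++ (W ++ p :: Z) by simp]
        exact ((List.Sublist.refl W).append (List.singleton_sublist.2 hz)).trans
          (List.sublist_append_right L _)
      exact hinc W z hsub hW (hC (by grind) hc)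
    have hX : ∀ x ∈ Z.map (fun q => [q.2]), ¬Cons (x ++ p.1 :: W.map Prod.fst) :=
      List.forall_mem_map.2 fun z hz => hinc_left z (List.mem_cons_of_mem _ hz)
    have hT_left : BlockTree Cons (N + 1) j (p.1 :: W.map Prod.fst ++ Z.map Prod.fst)
        ([p.2] :: Z.map fun q => [q.2]) :=
      hT.mono hC List.perm_middle.symm.subset
        fun x hx => ⟨x, List.mem_append_right _ hx, List.Subset.refl _⟩
    obtain ⟨w, hw, hXw, hT_right⟩ := hblind p Z (by simp [hH]) j (by omega)
      ⟨W.map Prod.fst, by simp [hW], hX,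
        hT_left.mono hC (List.Subset.refl _) fun x hx => ⟨x, by simp [hx], List.Subset.refl _⟩⟩
    refine ⟨p.1 :: W.map Prod.fst, p.2 :: w, by simp [hW], by simp [hw],
      List.forall_mem_cons.2 ⟨fun hc => hinc_left p (by simp) (hC (by grind) hc), hX⟩, hXw,
      hT_left.mono hC (List.Subset.refl _) ?_, hT_right⟩
    exact List.forall_mem_cons.2 ⟨⟨[p.2], by simp, by simp⟩,
      fun x hx => ⟨x, by simp [hx], List.Subset.refl _⟩⟩

theorem combTree_of_consistent (hC : SubsetClosed Cons) {N k : ℕ} {H : List (A × A)} {p₀ : A × A}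
    (hcon : Cons (p₀.2 :: H.map Prod.fst))
    (hsnd : ∀ Y, Y <+ (H ++ [p₀]).map Prod.snd → Y.length = k + 1 → ¬Cons Y)
    (hblind : ∀ p Z, p :: Z <+ H → ∀ j < N,
      CombTree (localize Cons [p₀.2]) k j (p.1 :: Z.map Prod.fst) (Z.map Prod.snd) →
      CombTree (localize Cons [p₀.2]) k j (p.2 :: Z.map Prod.fst) (Z.map Prod.snd))
    {j : ℕ} (hj : j ≤ N) {L Z : List (A × A)} (hH : H = L ++ Z) (hL : L.length = j) :
    CombTree (localize Cons [p₀.2]) k j (Z.map Prod.fst) (Z.map Prod.snd) := by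
  induction j generalizing L Z with
  | zero =>
    obtain rfl : L = [] := List.length_eq_zero_iff.1 hL
    obtain rfl : H = Z := by simpa using hH
    exact ⟨hC (by grind) hcon, fun Y hY hk => hsnd _ (by simpa using hY) (by simp [hk])⟩
  | succ j ih =>
    obtain ⟨L, p, rfl, hL'⟩ := exists_eq_concat_of_length hL
    have hT := ih (by omega) (Z := p :: Z) (by simp [hH]) hL'
    exact ⟨p.1, p.2, hT, hblind p Z (by simp [hH]) j (by omega)
      (hT.mono (hC.localize _) (List.Subset.refl _) (List.sublist_cons_self _ _))⟩

theorem blockTree_or_combTree_localize (k N h : ℕ) : ∃ n, ∀ {Cons : List A → Prop},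
    SubsetClosed Cons → CombTree Cons (k + 1) n [] [] →
    BlockTree Cons (N + 1) h [] [] ∨ ∃ a, CombTree (localize Cons [a]) k N [] [] := by
  obtain ⟨q, hq⟩ := exists_homogeneous_sublist (A := A × A) (N + 1) ((h + 1) * (N + 1))
  obtain ⟨n, hn⟩ := exists_columnBlind (A := A) ((Fin h → Prop) × (Fin N → Prop)) q
  refine ⟨n, fun {Cons} hC hT => ?_⟩
  obtain ⟨H, rfl, hblind, hH⟩ := hn hC hT fun Z c =>
    (fun j => BeginsBlock Cons N j (Z.map Prod.fst) (Z.map fun q => [q.2]) c,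
      fun j => ∀ Z' p, Z = Z' ++ [p] →
        CombTree (localize Cons [p.2]) k j (c :: Z'.map Prod.fst) (Z'.map Prod.snd))
  obtain ⟨H', hsub, hlen, hcon | hinc⟩ := hq
    (fun t => ∀ l p, t = l ++ [p] → Cons (p.2 :: l.map Prod.fst)) H le_rfl
  · right
    have htake : (H'.take (N + 1)).length = N + 1 := by
      rw [List.length_take, hlen, Nat.min_eq_left (Nat.le_mul_of_pos_left _ h.succ_pos)]
    obtain ⟨l, p, hl, hN⟩ := exists_eq_concat_of_length htake
    have hl' : l ++ [p] <+ H' := hl ▸ List.take_sublist _ _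
    refine ⟨p.2, combTree_of_consistent hC (hcon _ hl' (by simp [hN]) l p rfl)
      (fun Y hY => hH.2 Y (hY.trans ((hl'.trans hsub).map _))) (fun d Z hd j hj hT => ?_)
      le_rfl (List.append_nil l).symm hN⟩
    have hcol := (hblind.sublist ((hd.append (List.Sublist.refl [p])).trans (hl'.trans hsub))).2 _
      (List.Sublist.refl _)
    refine (congrFun (congrArg Prod.snd hcol) ⟨j, hj⟩).mp (fun Z' p' hZ => ?_) Z p rfl
    obtain ⟨rfl, hp⟩ := List.append_inj' hZ rfl
    obtain rfl := List.singleton_inj.1 hp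
    exact hT
  · left
    have htake : (H'.take (h * (N + 1))).length = h * (N + 1) := by
      rw [List.length_take, hlen, Nat.min_eq_left (Nat.mul_le_mul_right _ h.le_succ)]
    have htsub := List.take_sublist (h * (N + 1)) H'
    refine blockTree_of_inconsistent hC (fun l p hl hN hc => ?_)
      (hC ((htsub.trans hsub).map _).subset hH.1) (fun d Z hd j hj => ?_) le_rfl
      (List.append_nil _).symm htake
    · refine hinc _ (hl.trans htsub) (by simp [hN]) fun l' p' hl' => ?_
      obtain ⟨rfl, hp⟩ := List.append_inj' hl' rfl
      exact List.singleton_inj.1 hp ▸ hc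
    · have hcol := (hblind.sublist (hd.trans (htsub.trans hsub))).2 _ (List.Sublist.refl _)
      exact (congrFun (congrArg Prod.fst hcol) ⟨j, hj⟩).mp

theorem exists_blockTree (hC : SubsetClosed Cons) {k s : ℕ}
    (h : ∀ n, ∃ E : List A, E.length = s ∧ CombTree (localize Cons E) k n [] []) :
    ∃ K, ∀ h, BlockTree Cons K h [] [] := by
  induction k generalizing s with
  | zero =>
    obtain ⟨E, -, hE⟩ := h 0
    exact absurd (hC (by simp) hE.1) (hE.2 [] (List.nil_sublist _) rfl)
  | succ k ih =>
    by_cases hE : ∀ N, ∃ E : List A, E.length = s + 1 ∧ CombTree (localize Cons E) k N [] []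
    · exact ih hE
    · push Not at hE
      obtain ⟨N, hN⟩ := hE
      refine ⟨N + 1 + s, fun m => ?_⟩
      obtain ⟨n, hn⟩ := blockTree_or_combTree_localize (A := A) k N m
      obtain ⟨E, rfl, hT⟩ := h n
      obtain hB | ⟨a, ha⟩ := hn (hC.localize E) hT
      · exact hB.of_localize hC |>.mono hC (List.nil_subset _) (by simp)
      · exact absurd (localize_localize (Cons := Cons) E [a] ▸ ha) (hN (a :: E) rfl)

/-- The right siblings of the left turns of `η`, from the root downwards. -/
def rightSiblings : List Bool → List (List Bool)
  | [] => []
  | false :: η => [true] :: (rightSiblings η).map (List.cons false)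
  | true :: η => (rightSiblings η).map (List.cons true)

/-- The tree with root `r` whose subtrees at the two children of the root are `t₀` and `t₁`. -/
def joinTree {B : Type*} (r : B) (t₀ t₁ : List Bool → B) : List Bool → B
  | [] => r
  | false :: η => t₀ η
  | true :: η => t₁ η

section JoinTree

variable {B : Type*} (r : B) (t₀ t₁ : List Bool → B) (η : List Bool)

theorem map_inits_joinTree (i : Bool) : (i :: η).inits.map (joinTree r t₀ t₁) =
    r :: η.inits.map (bif i then t₁ else t₀) := by
  cases i <;> simp [joinTree, Function.comp_def]

theorem map_rightSiblings_joinTree_false : (rightSiblings (false :: η)).map (joinTree r t₀ t₁) =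
    t₁ [] :: (rightSiblings η).map t₀ := by
  simp [rightSiblings, joinTree, Function.comp_def]

theorem map_rightSiblings_joinTree_true : (rightSiblings (true :: η)).map (joinTree r t₀ t₁) =
    (rightSiblings η).map t₁ := by
  simp [rightSiblings, joinTree, Function.comp_def]

end JoinTree

/-- A tree of conditions in which, for every node of length `n`, the path to it is consistent and no
`k` of the right siblings of its left turns are consistent. -/
def IsCombTree (Cons : List A → Prop) (k n : ℕ) (T : List Bool → A) : Prop :=
  ∀ η : List Bool, η.length = n → Cons (η.inits.map T) ∧
    ∀ Y, Y <+ (rightSiblings η).map T → Y.length = k → ¬Cons Y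

theorem combTree_of_forall (hC : SubsetClosed Cons) {k n : ℕ} {S X : List A} {T : List Bool → A}
    (h : ∀ η : List Bool, η.length = n → Cons (η.inits.tail.map T ++ S) ∧
      ∀ Y, Y <+ X.reverse ++ (rightSiblings η).map T → Y.length = k → ¬Cons Y) :
    CombTree Cons k n S X := by
  induction n generalizing S X T with
  | zero =>
    obtain ⟨h₁, h₂⟩ := h [] rfl
    refine ⟨by simpa using h₁, fun Y hY hk hc => h₂ Y.reverse ?_ (by simpa using hk)
      (hC (by simp) hc)⟩
    simpa [rightSiblings] using hY.reverse
  | succ n ih =>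
    refine ⟨T [false], T [true], ih (T := fun η => T (false :: η)) fun η hη => ?_,
      ih (T := fun η => T (true :: η)) fun η hη => ?_⟩
    · obtain ⟨h₁, h₂⟩ := h (false :: η) (by simp [hη])
      exact ⟨hC (by cases η <;> grind [List.inits]) h₁,
        fun Y hY => h₂ Y (by simpa [rightSiblings, Function.comp_def] using hY)⟩
    · obtain ⟨h₁, h₂⟩ := h (true :: η) (by simp [hη])
      exact ⟨hC (by cases η <;> grind [List.inits]) h₁,
        fun Y hY => h₂ Y (by simpa [rightSiblings, Function.comp_def] using hY)⟩

theorem IsCombTree.combTree (hC : SubsetClosed Cons) {k n : ℕ} {T : List Bool → A}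
    (h : IsCombTree Cons k n T) : CombTree Cons k n [] [] :=
  combTree_of_forall hC fun η hη => ⟨hC (by simpa using List.map_subset T (List.tail_subset _))
    (h η hη).1, fun Y hY => (h η hη).2 Y (by simpa using hY)⟩

/-- A tree of height `h` whose nodes carry lists of conditions such that branches are consistent
and every node extending the left child of `η₁` is inconsistent with the right child of `η₁`. -/
structure IsSOP1Tree (Cons : List A → Prop) (h : ℕ) (t : List Bool → List A) : Prop where
  consistent : ∀ η : List Bool, η.length ≤ h → Cons (η.inits.flatMap t)
  inconsistent : ∀ η₁ η₂ : List Bool, η₁ ++ [false] <+: η₂ → η₂.length ≤ h →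
    ¬Cons (t (η₁ ++ [true]) ++ t η₂)

theorem BlockTree.exists_isSOP1Tree_root (hC : SubsetClosed Cons) {K h : ℕ} {D S : List A}
    {X : List (List A)} (hT : BlockTree Cons K h (D ++ S) X) (hD : D.length = K)
    (hX : ∀ x ∈ X, ¬Cons (x ++ D)) :
    ∃ t : List Bool → List A, t [] = D ∧ (∀ η, (t η).length = K) ∧
      (∀ η : List Bool, η.length ≤ h → Cons (η.inits.flatMap t ++ S) ∧ ∀ x ∈ X, ¬Cons (x ++ t η)) ∧
      ∀ η₁ η₂ : List Bool, η₁ ++ [false] <+: η₂ → η₂.length ≤ h →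
        ¬Cons (t (η₁ ++ [true]) ++ t η₂) := by
  induction h generalizing D S X with
  | zero =>
    refine ⟨fun _ => D, rfl, fun _ => hD, fun η hη => ?_, fun η₁ η₂ hp hη => ?_⟩
    · obtain rfl := List.length_eq_zero_iff.1 (Nat.le_zero.1 hη)
      exact ⟨by simpa [BlockTree] using hT, hX⟩
    · have := hp.length_le
      simp only [List.length_append, List.length_singleton] at this
      omega
  | succ h ih =>
    obtain ⟨D₀, D₁, hD₀, hD₁, hX₀, hX₁, h₀, h₁⟩ := hT
    obtain ⟨t₀, rfl, hlen₀, hcon₀, hinc₀⟩ := ih h₀ hD₀ hX₀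
    obtain ⟨t₁, rfl, hlen₁, hcon₁, hinc₁⟩ := ih h₁ hD₁ hX₁
    refine ⟨joinTree D t₀ t₁, rfl, ?_, ?_, ?_⟩
    · rintro (_ | ⟨_ | _, η⟩)
      exacts [hD, hlen₀ η, hlen₁ η]
    · rintro (_ | ⟨_ | _, η⟩) hη
      · refine ⟨hC ?_ (hcon₀ [] (by simp)).1, hX⟩
        simp [joinTree]
      · obtain ⟨hc, hx⟩ := hcon₀ η (by simpa using hη)
        refine ⟨hC ?_ hc, fun x hxX => hx x (List.mem_cons_of_mem _ hxX)⟩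
        rw [List.flatMap_def, map_inits_joinTree]
        simp [List.flatMap_def]
      · obtain ⟨hc, hx⟩ := hcon₁ η (by simpa using hη)
        refine ⟨hC ?_ hc, hx⟩
        rw [List.flatMap_def, map_inits_joinTree]
        simp [List.flatMap_def]
    · rintro (_ | ⟨i, η₁⟩) (_ | ⟨j, η₂⟩) hp hη
      · simp at hp
      · obtain ⟨rfl, -⟩ := List.cons_prefix_cons.1 hp
        exact (hcon₀ η₂ (by simpa using hη)).2 (t₁ []) List.mem_cons_self
      · simp at hp
      · obtain ⟨rfl, hp'⟩ := List.cons_prefix_cons.1 hp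
        cases i
        exacts [hinc₀ η₁ η₂ hp' (by simpa using hη), hinc₁ η₁ η₂ hp' (by simpa using hη)]

theorem exists_isSOP1Tree (hC : SubsetClosed Cons) {k : ℕ}
    (hT : ∀ n, ∃ T : List Bool → A, IsCombTree Cons k n T) :
    ∃ K, ∀ h, ∃ t : List Bool → Fin K → A, IsSOP1Tree Cons h fun η => List.ofFn (t η) := by
  obtain ⟨K, hK⟩ := exists_blockTree hC (s := 0) fun n => by
    obtain ⟨T, hT⟩ := hT n
    exact ⟨[], rfl, by simpa only [localize_nil] using hT.combTree hC⟩
  refine ⟨K, fun h => ?_⟩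
  obtain ⟨-, D, -, hD, -, -, -, hB⟩ := hK (h + 1)
  obtain ⟨t, -, hlen, hcon, hinc⟩ := hB.exists_isSOP1Tree_root hC hD (by simp)
  have ht : (fun η => List.ofFn fun i : Fin K => (t η).get (i.cast (hlen η).symm)) = t :=
    funext fun η => by
      refine List.ext_getElem (by simp [hlen]) fun i _ _ => by simp
  refine ⟨fun η i => (t η).get (i.cast (hlen η).symm), ?_⟩
  rw [ht]
  exact ⟨fun η hη => by simpa using (hcon η hη).1, hinc⟩

end Combinatorics

/-! ### Definable sets of tuples -/

section Definable

variable {L : FirstOrder.Language.{u, v}} {𝕄 : Type w} [L.Structure 𝕄] {A : Set 𝕄}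
variable {α : Type x} {β : Type y} {γ : Type z}

theorem exists_finset_formula_realize_iff (φ : L.Formula (α ⊕ γ)) :
    ∃ (s : Finset γ) (ψ : L.Formula (α ⊕ s)), ∀ (x : α → 𝕄) (y : γ → 𝕄),
      φ.Realize (Sum.elim x y) ↔ ψ.Realize (Sum.elim x fun i => y i) := by
  classical
  let s : Finset γ := (BoundedFormula.freeVarFinset φ).preimage Sum.inr Sum.inr_injective.injOn
  have hs : ∀ c, Sum.inr c ∈ BoundedFormula.freeVarFinset φ → c ∈ s := fun c hc => by
    simpa [s] using hc
  let f : BoundedFormula.freeVarFinset φ → α ⊕ s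
    | ⟨Sum.inl a, _⟩ => Sum.inl a
    | ⟨Sum.inr c, h⟩ => Sum.inr ⟨c, hs c h⟩
  refine ⟨s, BoundedFormula.restrictFreeVar φ f, fun x y =>
    (BoundedFormula.realize_restrictFreeVar (φ := φ) (f := f) (Sum.elim x y) ?_).symm⟩
  rintro ⟨a | c, h⟩ <;> rfl

theorem exists_finset_definable {D : Set (α ⊕ γ → 𝕄)} (hD : A.Definable L D) :
    ∃ (s : Finset γ) (D' : Set (α ⊕ s → 𝕄)), A.Definable L D' ∧
      ∀ (x : α → 𝕄) (y : γ → 𝕄), Sum.elim x y ∈ D ↔ Sum.elim x (fun i : s => y i) ∈ D' := by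
  obtain ⟨φ, rfl⟩ := Set.definable_iff_exists_formula_sum.1 hD
  obtain ⟨s, ψ, hψ⟩ := exists_finset_formula_realize_iff (𝕄 := 𝕄)
    (φ.relabel (Equiv.sumAssoc A α γ).symm)
  refine ⟨s, _, Set.definable_iff_exists_formula_sum.2
    ⟨ψ.relabel (Equiv.sumAssoc A α s), rfl⟩, fun x y => ?_⟩
  simp only [Set.mem_ofPred_eq, Formula.realize_relabel] at hψ ⊢
  convert hψ (Sum.elim (↑) x) y using 2
  · ext (_ | _ | _) <;> rfl
  · ext ((_ | _) | _) <;> rfl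

theorem definable_exists {D : Set (α ⊕ γ → 𝕄)} (hD : A.Definable L D) :
    A.Definable L {x : α → 𝕄 | ∃ y : γ → 𝕄, Sum.elim x y ∈ D} := by
  classical
  rcases isEmpty_or_nonempty 𝕄 with _ | h𝕄
  · rcases isEmpty_or_nonempty γ with _ | hγ
    · exact hD.exists_of_finite
    · convert Set.definable_empty
      exact Set.eq_empty_of_forall_notMem fun x ⟨y, _⟩ => hγ.elim fun i => isEmptyElim (y i)
  · obtain ⟨z⟩ := h𝕄
    obtain ⟨s, D', hD', hDD'⟩ := exists_finset_definable hD
    convert hD'.exists_of_finite using 1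
    ext x
    refine ⟨fun ⟨y, hy⟩ => ⟨_, (hDD' x y).1 hy⟩, fun ⟨y, hy⟩ =>
      ⟨fun i => if h : i ∈ s then y ⟨i, h⟩ else z, (hDD' _ _).2 ?_⟩⟩
    simpa using hy

theorem definable_image_comp [Finite β] {D : Set (α → 𝕄)} (hD : A.Definable L D) (g : β → α) :
    A.Definable L ((· ∘ g) '' D : Set (β → 𝕄)) := by
  have heq : A.Definable L (⋂ i, {z : β ⊕ α → 𝕄 | z (.inr (g i)) = z (.inl i)}) :=
    Set.definable_iInter_of_finite fun i =>
      Set.DefinableFun.ofPred_eq (Set.DefinableFun.proj L) (Set.DefinableFun.proj L)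
  convert definable_exists (heq.inter (hD.preimage_comp Sum.inr)) using 1
  ext y
  simp [funext_iff, and_comm]

theorem definable_fiber_comp [Finite β] (g : β → α) {y : β → 𝕄} (hy : ∀ i, y i ∈ A) :
    A.Definable L {x : α → 𝕄 | x ∘ g = y} := by
  convert Set.definable_iInter_of_finite (L := L) (A := A) fun i =>
    Set.DefinableFun.ofPred_eq_const (Set.DefinableFun.proj L (i := g i)) (hy i) using 1
  ext x
  simp [funext_iff]

theorem definable_forall {D : Set (α ⊕ γ → 𝕄)} (hD : A.Definable L D) :
    A.Definable L {x : α → 𝕄 | ∀ y : γ → 𝕄, Sum.elim x y ∈ D} := by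
  convert (definable_exists hD.compl).compl using 1
  ext x
  simp

theorem definable_preimage_elim {D : Set (α → 𝕄)} (hD : A.Definable L D) (σ : α → β ⊕ A) :
    A.Definable L {x : β → 𝕄 | (fun i => Sum.elim x (↑) (σ i)) ∈ D} := by
  obtain ⟨φ, rfl⟩ := Set.definable_iff_exists_formula_sum.1 hD
  refine Set.definable_iff_exists_formula_sum.2
    ⟨φ.relabel (Sum.elim Sum.inl (Sum.swap ∘ σ)), Set.ext fun x => ?_⟩
  simp only [Set.mem_ofPred_eq, Formula.realize_relabel]
  congr! 1
  ext (a | i)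
  · rfl
  · rcases h : σ i with j | m <;> simp [h]

theorem definable_iff_exists_paramFormula {D : Set (α → 𝕄)} :
    A.Definable L D ↔ ∃ φ : ParamFormula L 𝕄 α, φ.ParamsIn A ∧ D = {x | φ.Realize x} := by
  constructor
  · intro hD
    obtain ⟨A₀, hA₀, hD⟩ := Set.definable_iff_finitely_definable.1 hD
    obtain ⟨φ, rfl⟩ := Set.definable_iff_exists_formula_sum.1 hD
    let e := (Fintype.equivFin A₀).toFun
    let e' := (Fintype.equivFin A₀).symm
    refine ⟨⟨Fin (Fintype.card A₀), φ.relabel (Sum.elim (Sum.inr ∘ e) Sum.inl), fun i => e' i⟩,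
      fun i => hA₀ (e' i).2, Set.ext fun x => ?_⟩
    simp only [Set.mem_ofPred_eq, ParamFormula.Realize, Formula.realize_relabel]
    congr! 1
    ext (a | i)
    · simp [e, e']
    · rfl
  · rintro ⟨φ, hφ, rfl⟩
    refine Set.definable_iff_exists_formula_sum.2
      ⟨φ.toFormula.relabel (Sum.elim Sum.inr fun i => Sum.inl ⟨φ.params i, hφ i⟩),
        Set.ext fun x => ?_⟩
    simp only [Set.mem_ofPred_eq, ParamFormula.Realize, Formula.realize_relabel]
    congr! 1
    ext (a | i) <;> rfl

theorem ParamFormula.ParamsIn.definable {φ : ParamFormula L 𝕄 α} (hφ : φ.ParamsIn A) :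
    A.Definable L {x | φ.Realize x} :=
  definable_iff_exists_paramFormula.2 ⟨φ, hφ, rfl⟩

@[simp]
theorem ParamFormula.realize_subst {γ : Type} (φ : ParamFormula L 𝕄 (α ⊕ γ)) (c : γ → 𝕄)
    (x : α → 𝕄) : (φ.subst c).Realize x ↔ φ.Realize (Sum.elim x c) := by
  simp only [ParamFormula.Realize, ParamFormula.subst, Formula.realize_relabel]
  congr! 1
  ext ((i | i) | i) <;> rfl

theorem definable_union_range_iff {d : γ → 𝕄} {D : Set (α → 𝕄)} :
    (A ∪ Set.range d).Definable L D ↔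
      ∃ D' : Set (α ⊕ γ → 𝕄), A.Definable L D' ∧ D = {x | Sum.elim x d ∈ D'} := by
  classical
  constructor
  · intro hD
    obtain ⟨φ, rfl⟩ := Set.definable_iff_exists_formula_sum.1 hD
    have hpar : ∀ m : ↥(A ∪ Set.range d), ∃ i : A ⊕ γ, Sum.elim (↑) d i = (m : 𝕄) := by
      rintro ⟨m, hm | ⟨j, rfl⟩⟩
      exacts [⟨Sum.inl ⟨m, hm⟩, rfl⟩, ⟨Sum.inr j, rfl⟩]
    choose f hf using hpar
    refine ⟨_, Set.definable_iff_exists_formula_sum.2 ⟨φ.relabel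
      (Sum.elim (Sum.map id Sum.inr ∘ f) (Sum.inr ∘ Sum.inl)), rfl⟩, Set.ext fun x => ?_⟩
    simp only [Set.mem_ofPred_eq, Formula.realize_relabel]
    congr! 1
    ext (m | i)
    · rw [Sum.elim_inl, ← hf m]
      rcases h : f m <;> simp [h]
    · rfl
  · rintro ⟨D', hD', rfl⟩
    convert definable_preimage_elim (hD'.mono (B := A ∪ Set.range d) Set.subset_union_left)
      (β := α) (Sum.elim Sum.inl fun j => Sum.inr ⟨d j, Or.inr ⟨j, rfl⟩⟩) using 1
    ext x
    simp only [Set.mem_ofPred_eq]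
    congr! 1
    ext (i | j) <;> rfl

theorem TpEq.mem_iff {b b' : β → 𝕄} (h : TpEq L 𝕄 A b b') {D : Set (β → 𝕄)}
    (hD : A.Definable L D) : b ∈ D ↔ b' ∈ D := by
  obtain ⟨φ, hφ, rfl⟩ := definable_iff_exists_paramFormula.1 hD
  exact h φ hφ

theorem tpEq_iff {b b' : β → 𝕄} :
    TpEq L 𝕄 A b b' ↔ ∀ D : Set (β → 𝕄), A.Definable L D → b ∈ D → b' ∈ D :=
  ⟨fun h _ hD => (h.mem_iff hD).1, fun h _ hφ =>
    ⟨h _ hφ.definable, fun hb' => by_contra fun hb => h _ hφ.definable.compl hb hb'⟩⟩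

theorem TpEq.refl (b : β → 𝕄) : TpEq L 𝕄 A b b := fun _ _ => Iff.rfl

theorem TpEq.symm {b b' : β → 𝕄} (h : TpEq L 𝕄 A b b') : TpEq L 𝕄 A b' b :=
  fun φ hφ => (h φ hφ).symm

theorem TpEq.trans {b b' b'' : β → 𝕄} (h : TpEq L 𝕄 A b b') (h' : TpEq L 𝕄 A b' b'') :
    TpEq L 𝕄 A b b'' := fun φ hφ => (h φ hφ).trans (h' φ hφ)

theorem TpEq.comp {b b' : β → 𝕄} (h : TpEq L 𝕄 A b b') (g : γ → β) :
    TpEq L 𝕄 A (b ∘ g) (b' ∘ g) :=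
  tpEq_iff.2 fun _ hD => (h.mem_iff (hD.preimage_comp g)).1

theorem TpEq.elim_comp {δ ε : Type*} {x x' : β → 𝕄} {y y' : γ → 𝕄}
    (h : TpEq L 𝕄 A (Sum.elim x y) (Sum.elim x' y')) (g : δ → β) (g' : ε → γ) :
    TpEq L 𝕄 A (Sum.elim (x ∘ g) (y ∘ g')) (Sum.elim (x' ∘ g) (y' ∘ g')) := by
  simpa only [Sum.elim_comp_map] using h.comp (Sum.map g g')

theorem TpEq.elim_swap {x x' : β → 𝕄} {y y' : γ → 𝕄}
    (h : TpEq L 𝕄 A (Sum.elim x y) (Sum.elim x' y')) :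
    TpEq L 𝕄 A (Sum.elim y x) (Sum.elim y' x') := by
  simpa only [Sum.elim_swap] using h.comp Sum.swap

theorem TpEq.over_range {b b' : β → 𝕄} {e : γ → 𝕄}
    (h : TpEq L 𝕄 A (Sum.elim b e) (Sum.elim b' e)) : TpEq L 𝕄 (A ∪ Set.range e) b b' := by
  refine tpEq_iff.2 fun D hD => ?_
  obtain ⟨D', hD', rfl⟩ := definable_union_range_iff.1 hD
  exact (h.mem_iff hD').1

end Definable

/-! ### Small models -/

/-- The properties of a small elementary submodel `M` of the monster model that the argument uses:
tuples from `M` meet every nonempty `M`-definable set, and a filter base of `M`-definable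
conditions on countable tuples over one countable tuple `e` is realized as soon as each of its
members is. -/
structure SmallModel (L : FirstOrder.Language.{u, v}) {𝕄 : Type w} [L.Structure 𝕄]
    (M : Set 𝕄) : Prop where
  exists_mem_of_nonempty : ∀ {α : Type} {D : Set (α → 𝕄)}, M.Definable L D → D.Nonempty →
    ∃ x ∈ D, ∀ i, x i ∈ M
  exists_of_directed : ∀ {α γ : Type} [Countable α] [Countable γ] (e : γ → 𝕄)
    {F : Set (Set (α ⊕ γ → 𝕄))}, (∀ D ∈ F, M.Definable L D) → F.Nonempty →
    DirectedOn (· ⊇ ·) F → (∀ D ∈ F, ∃ x, Sum.elim x e ∈ D) → ∃ x, ∀ D ∈ F, Sum.elim x e ∈ D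

section SmallModel

variable {L : FirstOrder.Language.{u, v}} {𝕄 : Type w} [L.Structure 𝕄]

theorem SmallModel.exists_tpEq_elim {M : Set 𝕄} (hM : SmallModel L M) {α γ : Type} [Countable α]
    [Countable γ] {x x' : γ → 𝕄} (h : TpEq L 𝕄 M x x') (y : α → 𝕄) :
    ∃ y' : α → 𝕄, TpEq L 𝕄 M (Sum.elim y x) (Sum.elim y' x') := by
  obtain ⟨y', hy'⟩ := hM.exists_of_directed (α := α) x'
    (F := {D | M.Definable L D ∧ Sum.elim y x ∈ D}) (fun D hD => hD.1)
    ⟨_, Set.definable_univ, trivial⟩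
    (fun D hD D' hD' => ⟨D ∩ D', ⟨hD.1.inter hD'.1, hD.2, hD'.2⟩, Set.inter_subset_left,
      Set.inter_subset_right⟩) fun D hD => by
      have hex := definable_exists (hD.1.preimage_comp (Sum.swap : α ⊕ γ → γ ⊕ α))
      obtain ⟨y', hy'⟩ := (h.mem_iff hex).1 ⟨y, by simpa using hD.2⟩
      exact ⟨y', by simpa using hy'⟩
  exact ⟨y', tpEq_iff.2 fun D hD hx => hy' D ⟨hD, hx⟩⟩

theorem exists_mem_of_elementarySubstructure (M : L.ElementarySubstructure 𝕄) [Nonempty M]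
    {α : Type x} {D : Set (α → 𝕄)} (hD : (M : Set 𝕄).Definable L D) (hne : D.Nonempty) :
    ∃ x ∈ D, ∀ i, x i ∈ M := by
  classical
  obtain ⟨φ, rfl⟩ := Set.definable_iff_exists_formula_sum.1 hD
  obtain ⟨s, ψ, hψ⟩ := exists_finset_formula_realize_iff (𝕄 := 𝕄) φ
  obtain ⟨x, hx⟩ := hne
  have h𝕄 : (ψ.iExs s).Realize ((↑) : M → 𝕄) := Formula.realize_iExs.2 ⟨_, (hψ _ x).1 hx⟩
  obtain ⟨y, hy⟩ := Formula.realize_iExs.1 ((M.subtype.map_formula (ψ.iExs s) id).1 h𝕄)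
  let z : M := Classical.arbitrary M
  refine ⟨fun i => if h : i ∈ s then y ⟨i, h⟩ else z, (hψ _ _).2 ?_, fun i => ?_⟩
  · convert (M.subtype.map_formula ψ _).2 hy using 1
    ext (i | i)
    · rfl
    · simp
  · dsimp only
    split_ifs <;> exact Subtype.property _

theorem IsMonster.exists_forall_realize {κ : Cardinal.{w}} [IsMonster L 𝕄 κ] {A : Set 𝕄}
    (hA : Cardinal.mk A < κ) {α : Type} (hα : Cardinal.lift.{w} (Cardinal.mk α) < κ)
    {F : Set (Set (α → 𝕄))} (hF : ∀ D ∈ F, A.Definable L D) (hne : F.Nonempty)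
    (hdir : DirectedOn (· ⊇ ·) F) (hcons : ∀ D ∈ F, D.Nonempty) : (⋂₀ F).Nonempty := by
  classical
  choose f hfA hf using fun D : F =>
    definable_iff_exists_paramFormula.1 ((hF D D.2).preimage_comp (ULift.up.{w} : α → _))
  obtain ⟨x, hx⟩ := IsMonster.saturated (L := L) (κ := κ) (α := ULift.{w} α) A (Set.range f)
    (by simpa using hα) hA (Set.forall_mem_range.2 hfA) fun S hS => by
      have hbound : ∃ D ∈ F, ∀ φ ∈ S, ∀ x : ULift.{w} α → 𝕄, x ∘ ULift.up ∈ D → φ.Realize x := by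
        induction S using Finset.induction_on with
        | empty => exact hne.imp fun D hD => ⟨hD, by simp⟩
        | insert φ S _ ih =>
          obtain ⟨D, hD, hDS⟩ := ih fun φ hφ => hS φ (Finset.mem_insert_of_mem hφ)
          obtain ⟨⟨E, hE⟩, rfl⟩ := hS φ (Finset.mem_insert_self _ _)
          obtain ⟨C, hC, hCD, hCE⟩ := hdir D hD E hE
          refine ⟨C, hC, Finset.forall_mem_insert .. |>.2
            ⟨fun x hx => ?_, fun ψ hψ x hx => hDS ψ hψ x (hCD hx)⟩⟩
          exact (hf ⟨E, hE⟩).le (hCE hx)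
      obtain ⟨D, hD, hDS⟩ := hbound
      obtain ⟨x, hx⟩ := hcons D hD
      exact ⟨x ∘ ULift.down, fun φ hφ => hDS φ hφ _ hx⟩
  exact ⟨x ∘ ULift.up, fun D hD => (hf ⟨D, hD⟩).ge (hx _ ⟨⟨D, hD⟩, rfl⟩)⟩

theorem IsMonster.smallModel {κ : Cardinal.{w}} [IsMonster L 𝕄 κ]
    (M : L.ElementarySubstructure 𝕄) (hM : Cardinal.mk (M : Set 𝕄) < κ)
    (hinf : Cardinal.aleph0 ≤ Cardinal.mk (M : Set 𝕄)) : SmallModel L (M : Set 𝕄) where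
  exists_mem_of_nonempty := by
    have : Nonempty M := Cardinal.mk_ne_zero_iff.1 (Cardinal.aleph0_pos.trans_le hinf).ne'
    exact fun {_ _} hD => exists_mem_of_elementarySubstructure M hD
  exists_of_directed {α γ} _ _ e F hF hne hdir hcons := by
    have hcard : Cardinal.mk ↥((M : Set 𝕄) ∪ Set.range e) < κ := by
      refine (Cardinal.mk_union_le _ _).trans_lt ?_
      have : Countable (Set.range e) := (Set.countable_range e).to_subtype
      rwa [Cardinal.add_eq_left hinf (Cardinal.mk_le_aleph0.trans hinf)]
    have hα : Cardinal.lift.{w} (Cardinal.mk α) < κ :=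
      (Cardinal.lift_le_aleph0.2 Cardinal.mk_le_aleph0).trans_lt (hinf.trans_lt hM)
    obtain ⟨x, hx⟩ := IsMonster.exists_forall_realize (L := L) hcard hα
      (F := (fun D => {x | Sum.elim x e ∈ D}) '' F)
      (Set.forall_mem_image.2 fun D hD => definable_union_range_iff.2 ⟨D, hF D hD, rfl⟩)
      (hne.image _)
      (by
        rintro _ ⟨D, hD, rfl⟩ _ ⟨E, hE, rfl⟩
        obtain ⟨C, hC, hCD, hCE⟩ := hdir D hD E hE
        exact ⟨_, ⟨C, hC, rfl⟩, fun x hx => hCD hx, fun x hx => hCE hx⟩)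
      (Set.forall_mem_image.2 hcons)
    exact ⟨x, fun D hD => hx _ ⟨D, hD, rfl⟩⟩

end SmallModel

/-! ### Ultrafilters of tuples and their Morley sequences -/

section UltrafilterDefs

variable (L : FirstOrder.Language.{u, v}) {𝕄 : Type w} [L.Structure 𝕄]

/-- Invariance over `M` of the global type whose formulas are the definable sets in the ultrafilter
`U`: membership of an instance in `U` depends only on the type over `M` of its parameters. -/
def InvariantUltrafilter (M : Set 𝕄) {β : Type x} (U : Ultrafilter (β → 𝕄)) : Prop :=
  ∀ ⦃γ : Type⦄ ⦃D : Set (β ⊕ γ → 𝕄)⦄, M.Definable L D → ∀ ⦃e e' : γ → 𝕄⦄, TpEq L 𝕄 M e e' →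
    {x | Sum.elim x e ∈ D} ∈ U → {x | Sum.elim x e' ∈ D} ∈ U

/-- The tuple `a` realizes the restriction to `B` of the global type given by the ultrafilter
`U`. -/
def Realizes {β : Type x} (U : Ultrafilter (β → 𝕄)) (B : Set 𝕄) (a : β → 𝕄) : Prop :=
  ∀ ⦃D : Set (β → 𝕄)⦄, B.Definable L D → D ∈ U → a ∈ D

/-- Finite Morley sequences over `M` in the global type given by `U`, as lists with the most recent
entry first. -/
def IsMorleyList (M : Set 𝕄) {β : Type x} (U : Ultrafilter (β → 𝕄)) : List (β → 𝕄) → Prop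
  | [] => True
  | x :: l => IsMorleyList M U l ∧ Realizes L U (M ∪ ⋃ y ∈ l, Set.range y) x

/-- Infinite Morley sequences over `M` in the global type given by `U`. -/
def IsMorleySeq (M : Set 𝕄) {β : Type x} (U : Ultrafilter (β → 𝕄)) (b : ℕ → β → 𝕄) : Prop :=
  ∀ i, Realizes L U (M ∪ ⋃ j ∈ Set.Iio i, Set.range (b j)) (b i)

/-- The instances of the condition `D` at the entries of the list `l` have a common solution. -/
def ConsistentAlong {ξ : Type y} {β : Type x} (D : Set (ξ ⊕ β → 𝕄)) (l : List (β → 𝕄)) : Prop :=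
  ∃ x : ξ → 𝕄, ∀ e ∈ l, Sum.elim x e ∈ D

/-- The condition `D` is consistent along Morley sequences over `M` in the global type given
by `U`. -/
def MorleyConsistent {ξ : Type y} (M : Set 𝕄) {β : Type x} (U : Ultrafilter (β → 𝕄))
    (D : Set (ξ ⊕ β → 𝕄)) : Prop :=
  ∀ l, IsMorleyList L M U l → ConsistentAlong D l

end UltrafilterDefs

section Ultrafilter

variable {L : FirstOrder.Language.{u, v}} {𝕄 : Type w} [L.Structure 𝕄] {M B B' : Set 𝕄}
variable {β : Type x} {ξ : Type y} {U : Ultrafilter (β → 𝕄)}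

theorem Realizes.mono {a : β → 𝕄} (ha : Realizes L U B a) (h : B' ⊆ B) : Realizes L U B' a :=
  fun _ hD => ha (hD.mono h)

theorem Realizes.mem_iff {a : β → 𝕄} (ha : Realizes L U B a) {D : Set (β → 𝕄)}
    (hD : B.Definable L D) : D ∈ U ↔ a ∈ D :=
  ⟨ha hD, fun haD => by_contra fun h => ha hD.compl (Ultrafilter.compl_mem_iff_notMem.2 h) haD⟩

theorem Realizes.tpEq {a a' : β → 𝕄} (h : Realizes L U B a) (h' : Realizes L U B a') :
    TpEq L 𝕄 B a a' :=
  tpEq_iff.2 fun _ hD ha => h' hD ((h.mem_iff hD).2 ha)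

theorem Realizes.congr {a a' : β → 𝕄} (h : Realizes L U B a) (haa' : TpEq L 𝕄 B a a') :
    Realizes L U B a' :=
  fun _ hD hU => (haa'.mem_iff hD).1 (h hD hU)

theorem realizes_union_range_iff {γ : Type y} {e : γ → 𝕄} {a : β → 𝕄} :
    Realizes L U (B ∪ Set.range e) a ↔ ∀ D : Set (β ⊕ γ → 𝕄), B.Definable L D →
      {x | Sum.elim x e ∈ D} ∈ U → Sum.elim a e ∈ D := by
  refine ⟨fun h D hD => h (definable_union_range_iff.2 ⟨D, hD, rfl⟩), fun h D hD => ?_⟩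
  obtain ⟨D', hD', rfl⟩ := definable_union_range_iff.1 hD
  exact h D' hD'

theorem Realizes.congr_elim (hU : InvariantUltrafilter L M U) {γ : Type} {e e' : γ → 𝕄}
    {a a' : β → 𝕄} (h : TpEq L 𝕄 M (Sum.elim a e) (Sum.elim a' e'))
    (ha : Realizes L U (M ∪ Set.range e) a) : Realizes L U (M ∪ Set.range e') a' :=
  realizes_union_range_iff.2 fun D hD hD' => (h.mem_iff hD).1
    (realizes_union_range_iff.1 ha D hD (hU hD (h.comp Sum.inr).symm hD'))

theorem Realizes.tpEq_elim (hU : InvariantUltrafilter L M U) {γ : Type} {e e' : γ → 𝕄}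
    {a a' : β → 𝕄} (he : TpEq L 𝕄 M e e') (ha : Realizes L U (M ∪ Set.range e) a)
    (ha' : Realizes L U (M ∪ Set.range e') a') : TpEq L 𝕄 M (Sum.elim a e) (Sum.elim a' e') :=
  tpEq_iff.2 fun D hD hx => realizes_union_range_iff.1 ha' D hD <|
    hU hD he ((ha.mem_iff (definable_union_range_iff.2 ⟨D, hD, rfl⟩)).2 hx)

theorem IsMorleyList.sublist {l l' : List (β → 𝕄)} (hl : IsMorleyList L M U l)
    (h : l'.Sublist l) : IsMorleyList L M U l' := by
  induction h with
  | slnil => trivial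
  | cons _ _ ih => exact ih hl.1
  | cons_cons _ h ih =>
    exact ⟨ih hl.1, hl.2.mono (Set.union_subset_union_right _
      (Set.biUnion_subset_biUnion_left h.subset))⟩

theorem ConsistentAlong.mono {D D' : Set (ξ ⊕ β → 𝕄)} {l l' : List (β → 𝕄)}
    (h : ConsistentAlong D l) (hD : D ⊆ D') (hl : l' ⊆ l) : ConsistentAlong D' l' :=
  h.imp fun _ hx e he => hD (hx e (hl he))

theorem definable_consistentAlong {D : Set (ξ ⊕ β → 𝕄)} (hD : M.Definable L D) {ι α : Type*}
    (l : List ι) (f : ι → β → α) :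
    M.Definable L {τ : α → 𝕄 | ConsistentAlong D (l.map fun i => τ ∘ f i)} := by
  classical
  have h := definable_exists (Set.definable_biInter_finset (s := l.toFinset) fun i =>
    hD.preimage_comp (Sum.elim (Sum.inr : ξ → α ⊕ ξ) (Sum.inl ∘ f i)))
  convert h using 1
  ext τ
  simp [ConsistentAlong, Sum.comp_elim, ← Function.comp_assoc]

theorem IsMorleySeq.isMorleyList {b : ℕ → β → 𝕄} (h : IsMorleySeq L M U b) {l : List ℕ}
    (hl : l.Pairwise (· > ·)) : IsMorleyList L M U (l.map b) := by
  induction l with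
  | nil => trivial
  | cons i l ih =>
    rw [List.pairwise_cons] at hl
    refine ⟨ih hl.2, (h i).mono (Set.union_subset_union_right _ ?_)⟩
    refine Set.iUnion₂_subset fun y hy => ?_
    obtain ⟨j, hj, rfl⟩ := List.mem_map.1 hy
    exact Set.subset_biUnion_of_mem (u := fun j => Set.range (b j)) (hl.1 j hj)

theorem IsMorleySeq.isMorleyList_range {b : ℕ → β → 𝕄} (h : IsMorleySeq L M U b) (n : ℕ) :
    IsMorleyList L M U ((List.range n).reverse.map b) :=
  h.isMorleyList (List.pairwise_reverse.2 List.pairwise_lt_range)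

theorem IsMorleySeq.comp_strictMono {b : ℕ → β → 𝕄} (h : IsMorleySeq L M U b) {g : ℕ → ℕ}
    (hg : StrictMono g) : IsMorleySeq L M U (b ∘ g) := fun i =>
  (h (g i)).mono <| Set.union_subset_union_right _ <| Set.iUnion₂_subset fun _ hj =>
    Set.subset_biUnion_of_mem (u := fun j => Set.range (b j)) (hg hj)

theorem MorleyConsistent.consistentAlong_range {b : ℕ → β → 𝕄} {D : Set (ξ ⊕ β → 𝕄)}
    (hD : MorleyConsistent L M U D) (hb : IsMorleySeq L M U b) (n : ℕ) :
    ConsistentAlong D ((List.range n).map b) :=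
  (hD _ (hb.isMorleyList_range n)).mono subset_rfl
    (List.map_subset _ (List.reverse_perm _).symm.subset)

end Ultrafilter

section MorleyExistence

variable {L : FirstOrder.Language.{u, v}} {𝕄 : Type w} [L.Structure 𝕄] {M : Set 𝕄}
variable {β ξ : Type} {U : Ultrafilter (β → 𝕄)}

theorem range_flat_getD_subset {l : List (β → 𝕄)} {d : β → 𝕄} (hd : ∀ i, d i ∈ M) :
    Set.range (flat (l.getD · d)) ⊆ M ∪ ⋃ y ∈ l, Set.range y := by
  rintro _ ⟨⟨n, i⟩, rfl⟩
  change l.getD n d i ∈ _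
  rcases lt_or_ge n l.length with h | h
  · rw [List.getD_eq_getElem _ _ h]
    exact Or.inr (Set.mem_biUnion (List.getElem_mem h) (Set.mem_range_self i))
  · rw [List.getD_eq_default _ _ h]
    exact Or.inl (hd i)

theorem IsMorleyList.tpEq (hU : InvariantUltrafilter L M U) {l l' : List (β → 𝕄)}
    (h : IsMorleyList L M U l) (h' : IsMorleyList L M U l') (hl : l.length = l'.length)
    {d : β → 𝕄} (hd : ∀ i, d i ∈ M) :
    TpEq L 𝕄 M (flat (l.getD · d)) (flat (l'.getD · d)) := by
  induction l generalizing l' with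
  | nil =>
    obtain rfl := List.length_eq_zero_iff.1 hl.symm
    exact TpEq.refl _
  | cons x l ih =>
    obtain ⟨x', l', rfl⟩ := List.exists_cons_of_length_eq_add_one hl.symm
    have realizes_over_flat : ∀ {x : β → 𝕄} {l}, IsMorleyList L M U (x :: l) →
        Realizes L U (M ∪ Set.range (flat (l.getD · d))) x := fun h =>
      h.2.mono (Set.union_subset Set.subset_union_left (range_flat_getD_subset hd))
    let g : ℕ × β → β ⊕ (ℕ × β)
      | (0, i) => Sum.inl i
      | (n + 1, i) => Sum.inr (n, i)
    have hg : ∀ (x : β → 𝕄) l,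
        flat ((x :: l).getD · d) = Sum.elim x (flat (l.getD · d)) ∘ g := by
      intro x l
      ext ⟨_ | n, i⟩ <;> rfl
    rw [hg, hg]
    exact ((realizes_over_flat h).tpEq_elim hU (ih h.1 h'.1 (by simpa using hl))
      (realizes_over_flat h')).comp g

theorem IsMorleyList.consistentAlong (hM : SmallModel L M) (hU : InvariantUltrafilter L M U)
    {D : Set (ξ ⊕ β → 𝕄)} (hD : M.Definable L D) {l l' : List (β → 𝕄)}
    (h : IsMorleyList L M U l) (h' : IsMorleyList L M U l') (hl : l.length = l'.length)
    (hc : ConsistentAlong D l) : ConsistentAlong D l' := by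
  have := Filter.nonempty_of_neBot (U : Filter (β → 𝕄))
  obtain ⟨d, -, hd⟩ := hM.exists_mem_of_nonempty (D := (Set.univ : Set (β → 𝕄)))
    Set.definable_univ Set.univ_nonempty
  have map_getD : ∀ l : List (β → 𝕄), (List.range l.length).map (l.getD · d) = l := fun l =>
    List.ext_getElem (by simp) fun i _ h => by simp [h]
  have key := (h.tpEq hU h' hl hd).mem_iff
    (definable_consistentAlong hD (List.range l.length) Prod.mk)
  change ConsistentAlong D ((List.range l.length).map (l.getD · d)) ↔
    ConsistentAlong D ((List.range l.length).map (l'.getD · d)) at key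
  rw [map_getD, hl, map_getD] at key
  exact key.1 hc

theorem exists_length_bound_of_not_morleyConsistent (hM : SmallModel L M)
    (hU : InvariantUltrafilter L M U) {D : Set (ξ ⊕ β → 𝕄)} (hD : M.Definable L D)
    (h : ¬MorleyConsistent L M U D) :
    ∃ k, ∀ l, IsMorleyList L M U l → ConsistentAlong D l → l.length < k := by
  simp only [MorleyConsistent, not_forall] at h
  obtain ⟨l, hl, hc⟩ := h
  refine ⟨l.length, fun l' hl' hc' => lt_of_not_ge fun hle => hc ?_⟩
  exact (hl'.sublist (List.take_sublist l.length _)).consistentAlong hM hU hD hl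
    (by simpa using hle) (hc'.mono subset_rfl (List.take_subset _ _))

theorem IsMorleySeq.morleyConsistent (hM : SmallModel L M) (hU : InvariantUltrafilter L M U)
    {D : Set (ξ ⊕ β → 𝕄)} (hD : M.Definable L D) {b : ℕ → β → 𝕄} (hb : IsMorleySeq L M U b)
    (hc : ∀ n, ConsistentAlong D ((List.range n).map b)) : MorleyConsistent L M U D := fun l hl =>
  (hb.isMorleyList_range l.length).consistentAlong hM hU hD hl (by simp)
    ((hc _).mono subset_rfl (List.map_subset _ (List.reverse_perm _).subset))

theorem exists_realizes [Countable β] (hM : SmallModel L M) (U : Ultrafilter (β → 𝕄)) {S : Set 𝕄}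
    (hS : S.Countable) : ∃ a, Realizes L U (M ∪ S) a := by
  obtain ⟨γ, hγ, e, rfl⟩ : ∃ (γ : Type) (_ : Countable γ) (e : γ → 𝕄), Set.range e = S := by
    have := hS.to_subtype
    let σ := (equivShrink.{0} S).symm
    exact ⟨_, σ.injective.countable, Subtype.val ∘ σ, by
      rw [σ.surjective.range_comp, Subtype.range_coe]⟩
  obtain ⟨a, ha⟩ := hM.exists_of_directed e
    (F := {D | M.Definable L D ∧ {x : β → 𝕄 | Sum.elim x e ∈ D} ∈ U}) (fun D hD => hD.1)
    ⟨_, Set.definable_univ, Filter.univ_mem⟩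
    (fun D hD D' hD' => ⟨D ∩ D', ⟨hD.1.inter hD'.1, Filter.inter_mem hD.2 hD'.2⟩,
      Set.inter_subset_left, Set.inter_subset_right⟩)
    (fun D hD => Ultrafilter.nonempty_of_mem hD.2)
  exact ⟨a, realizes_union_range_iff.2 fun D hD hU => ha D ⟨hD, hU⟩⟩

theorem exists_isMorleySeq [Countable β] (hM : SmallModel L M) (U : Ultrafilter (β → 𝕄)) :
    ∃ b, IsMorleySeq L M U b := by
  have := Filter.nonempty_of_neBot (U : Filter (β → 𝕄))
  choose! f hf using fun S : Set 𝕄 => exists_realizes hM U (S := S)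
  let b : ℕ → β → 𝕄 := Nat.lt_wfRel.wf.fix fun n b => f (⋃ j, ⋃ hj : j < n, Set.range (b j hj))
  have hb : ∀ n, b n = f (⋃ j ∈ Set.Iio n, Set.range (b j)) := fun n =>
    Nat.lt_wfRel.wf.fix_eq _ n
  refine ⟨b, fun n => ?_⟩
  rw [hb]
  exact hf _ ((Set.to_countable _).biUnion fun j _ => Set.countable_range _)

theorem MorleyConsistent.exists_forall_mem [Countable ξ] [Countable β] (hM : SmallModel L M)
    {b : ℕ → β → 𝕄} (hb : IsMorleySeq L M U b) {F : Set (Set (ξ ⊕ β → 𝕄))}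
    (hF : ∀ D ∈ F, M.Definable L D) (hne : F.Nonempty) (hdir : DirectedOn (· ⊇ ·) F)
    (hc : ∀ D ∈ F, MorleyConsistent L M U D) :
    ∃ x : ξ → 𝕄, ∀ i, ∀ D ∈ F, Sum.elim x (b i) ∈ D := by
  let g : ℕ → ξ ⊕ β → ξ ⊕ (ℕ × β) := fun i => Sum.map id (Prod.mk i)
  have hg : ∀ i (x : ξ → 𝕄), Sum.elim x (flat b) ∘ g i = Sum.elim x (b i) := fun i x => by
    rw [Sum.elim_comp_map]
    rfl
  refine (hM.exists_of_directed (flat b)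
    (F := {E | ∃ D ∈ F, ∃ n : ℕ, E = ⋂ i ∈ Finset.range n, (· ∘ g i) ⁻¹' D}) ?_ ?_ ?_ ?_).imp
    fun x hx i D hD => ?_
  rotate_right
  · have := hx _ ⟨D, hD, i + 1, rfl⟩
    rw [← hg]
    exact Set.mem_iInter₂.1 this i (Finset.self_mem_range_succ i)
  · rintro _ ⟨D, hD, n, rfl⟩
    exact Set.definable_biInter_finset (fun i => (hF D hD).preimage_comp (g i)) _
  · obtain ⟨D, hD⟩ := hne
    exact ⟨_, D, hD, 0, rfl⟩
  · rintro _ ⟨D, hD, n, rfl⟩ _ ⟨D', hD', n', rfl⟩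
    obtain ⟨C, hC, hCD, hCD'⟩ := hdir D hD D' hD'
    have hmono : ∀ {D m}, C ⊆ D → m ≤ max n n' → ⋂ i ∈ Finset.range (max n n'), (· ∘ g i) ⁻¹' C ⊆
        ⋂ i ∈ Finset.range m, (· ∘ g i) ⁻¹' D := fun hCD hm =>
      Set.biInter_mono (Finset.range_mono hm) fun i _ => Set.preimage_mono hCD
    exact ⟨_, ⟨C, hC, max n n', rfl⟩, hmono hCD (le_max_left _ _), hmono hCD' (le_max_right _ _)⟩
  · rintro _ ⟨D, hD, n, rfl⟩
    obtain ⟨x, hx⟩ := (hc D hD).consistentAlong_range hb n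
    refine ⟨x, Set.mem_iInter₂.2 fun i hi => ?_⟩
    rw [Set.mem_preimage, hg]
    exact hx _ (List.mem_map_of_mem (by simpa using hi))

end MorleyExistence

section Reindexing

variable {L : FirstOrder.Language.{u, v}} {𝕄 : Type w} [L.Structure 𝕄] {M B : Set 𝕄}
variable {α : Type x} {β : Type y} {U : Ultrafilter (β → 𝕄)}

theorem InvariantUltrafilter.map (hU : InvariantUltrafilter L M U) (g : α → β) :
    InvariantUltrafilter L M (U.map (· ∘ g)) := by
  intro γ D hD e e' he hDe
  have := hU (hD.preimage_comp (Sum.map g id)) he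
  simp only [Set.preimage, Set.mem_ofPred_eq, Sum.elim_comp_map, Function.comp_id] at this
  exact this hDe

theorem Realizes.map {a : β → 𝕄} (ha : Realizes L U B a) (g : α → β) :
    Realizes L (U.map (· ∘ g)) B (a ∘ g) :=
  fun _ hD => ha (hD.preimage_comp g)

theorem IsMorleyList.map {l : List (β → 𝕄)} (h : IsMorleyList L M U l) (g : α → β) :
    IsMorleyList L M (U.map (· ∘ g)) (l.map (· ∘ g)) := by
  induction l with
  | nil => trivial
  | cons x l ih =>
    refine ⟨ih h.1, (h.2.map g).mono (Set.union_subset_union_right _ ?_)⟩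
    refine Set.iUnion₂_subset fun _ hy => ?_
    obtain ⟨y, hyl, rfl⟩ := List.mem_map.1 hy
    exact (Set.range_comp_subset_range _ _).trans
      (Set.subset_iUnion₂ (s := fun (y : β → 𝕄) (_ : y ∈ l) => Set.range y) y hyl)

theorem IsMorleySeq.map {b : ℕ → β → 𝕄} (h : IsMorleySeq L M U b) (g : α → β) :
    IsMorleySeq L M (U.map (· ∘ g)) fun i => b i ∘ g := fun i =>
  ((h i).map g).mono <| Set.union_subset_union_right _ <|
    Set.biUnion_mono subset_rfl fun _ _ => Set.range_comp_subset_range _ _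

theorem consistentAlong_map_comp {ξ : Type z} {D : Set (ξ ⊕ α → 𝕄)} {l : List (β → 𝕄)}
    (g : α → β) : ConsistentAlong D (l.map (· ∘ g)) ↔
      ConsistentAlong ((· ∘ Sum.map id g) ⁻¹' D) l := by
  simp [ConsistentAlong, Sum.elim_comp_map]

theorem morleyConsistent_map {ξ α β : Type} [Countable β] {U : Ultrafilter (β → 𝕄)}
    (hM : SmallModel L M) (hU : InvariantUltrafilter L M U) {D : Set (ξ ⊕ α → 𝕄)}
    (hD : M.Definable L D) (g : α → β) :
    MorleyConsistent L M (U.map (· ∘ g)) D ↔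
      MorleyConsistent L M U ((· ∘ Sum.map id g) ⁻¹' D) := by
  refine ⟨fun h l hl => (consistentAlong_map_comp g).1 (h _ (hl.map g)), fun h => ?_⟩
  obtain ⟨b, hb⟩ := exists_isMorleySeq hM U
  refine (hb.map g).morleyConsistent hM (hU.map g) hD fun n => ?_
  have := (consistentAlong_map_comp g).2 (h.consistentAlong_range hb n)
  rwa [List.map_map] at this

end Reindexing

/-! ### Coheirs -/

section Coheir

variable {L : FirstOrder.Language.{u, v}} {𝕄 : Type w} [L.Structure 𝕄] {M B : Set 𝕄}

/-- The ultrafilter concentrates on tuples from `M`, so that the global type it gives is finitely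
satisfiable in `M`. -/
def CoheirUltrafilter (M : Set 𝕄) {β : Type x} (U : Ultrafilter (β → 𝕄)) : Prop :=
  {x : β → 𝕄 | ∀ i, x i ∈ M} ∈ U

theorem CoheirUltrafilter.map {α : Type x} {β : Type y} {U : Ultrafilter (β → 𝕄)}
    (hU : CoheirUltrafilter M U) (g : α → β) : CoheirUltrafilter M (U.map (· ∘ g)) :=
  Filter.mem_of_superset (x := {x : β → 𝕄 | ∀ i, x i ∈ M}) hU fun _ hx i => hx (g i)

theorem CoheirUltrafilter.invariantUltrafilter {β : Type x} {U : Ultrafilter (β → 𝕄)}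
    (hU : CoheirUltrafilter M U) : InvariantUltrafilter L M U := by
  intro γ D hD e e' he hDe
  filter_upwards [hDe, hU] with x hx hxM
  have hfiber : M.Definable L {e : γ → 𝕄 | Sum.elim x e ∈ D} := by
    convert definable_preimage_elim hD (Sum.elim (fun i => Sum.inr ⟨x i, hxM i⟩) Sum.inl) using 4
    ext (_ | _) <;> rfl
  exact (he.mem_iff hfiber).1 hx

theorem exists_ultrafilter_le_forall_mem {X : Type*} {f : Filter X} {F : Set (Set X)}
    (hne : F.Nonempty) (hdir : DirectedOn (· ⊇ ·) F) (hF : ∀ D ∈ F, ∃ᶠ x in f, x ∈ D) :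
    ∃ U : Ultrafilter X, ↑U ≤ f ∧ ∀ D ∈ F, D ∈ U := by
  have : (f ⊓ ⨅ D ∈ F, Filter.principal D).NeBot := by
    refine Filter.inf_neBot_iff_frequently_right.2 fun {p} hp => ?_
    obtain ⟨D, hD, hDp⟩ := (Filter.mem_biInf_of_directed
      (hdir.mono fun _ _ h => Filter.principal_mono.2 h) hne).1 hp
    exact (hF D hD).mono fun x hx => hDp hx
  obtain ⟨U, hU⟩ := Ultrafilter.exists_le (f ⊓ ⨅ D ∈ F, Filter.principal D)
  exact ⟨U, hU.trans inf_le_left, fun D hD => Filter.le_principal_iff.1 <|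
    hU.trans <| inf_le_right.trans <| iInf₂_le D hD⟩

theorem CoheirUltrafilter.exists_extension (hM : SmallModel L M) {α γ : Type} [Finite α]
    {U : Ultrafilter (α → 𝕄)} (hU : CoheirUltrafilter M U) {c : γ → 𝕄} {g : α → γ}
    (hc : Realizes L U M (c ∘ g)) :
    ∃ W : Ultrafilter (γ → 𝕄), CoheirUltrafilter M W ∧ W.map (· ∘ g) = U ∧ Realizes L W M c := by
  let F : Set (Set (γ → 𝕄)) := {E | ∃ D, M.Definable L D ∧ c ∈ D ∧ E = D ∩ {x | ∀ i, x i ∈ M}}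
  have directed : DirectedOn (· ⊇ ·) F := by
    rintro _ ⟨D, hD, hcD, rfl⟩ _ ⟨D', hD', hcD', rfl⟩
    exact ⟨_, ⟨_, hD.inter hD', ⟨hcD, hcD'⟩, rfl⟩,
      Set.inter_subset_inter_left _ Set.inter_subset_left,
      Set.inter_subset_inter_left _ Set.inter_subset_right⟩
  have extend_in_M : ∀ E ∈ F, ∃ᶠ x in Filter.comap (· ∘ g) (U : Filter (α → 𝕄)), x ∈ E := by
    rintro _ ⟨D, hD, hcD, rfl⟩
    refine Filter.frequently_comap.2 (Filter.Eventually.frequently ?_)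
    filter_upwards [(hc.mem_iff (definable_image_comp hD g)).2 ⟨c, hcD, rfl⟩, hU] with y hyD hyM
    obtain ⟨x, hxD, hx⟩ := hyD
    obtain ⟨x', ⟨hx', hx'D⟩, hx'M⟩ :=
      hM.exists_mem_of_nonempty ((definable_fiber_comp g hyM).inter hD) ⟨x, hx, hxD⟩
    exact ⟨x', hx', hx'D, hx'M⟩
  obtain ⟨W, hWU, hWF⟩ := exists_ultrafilter_le_forall_mem
    (F := F) ⟨_, _, Set.definable_univ, Set.mem_univ c, rfl⟩ directed extend_in_M
  refine ⟨W, ?_, Ultrafilter.coe_le_coe.1 (Filter.map_le_iff_le_comap.2 hWU), fun D hD hDW => ?_⟩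
  · exact Filter.mem_of_superset (hWF _ ⟨_, Set.definable_univ, Set.mem_univ c, rfl⟩)
      Set.inter_subset_right
  · by_contra hcD
    exact Ultrafilter.compl_mem_iff_notMem.1
      (Filter.mem_of_superset (hWF _ ⟨_, hD.compl, hcD, rfl⟩) Set.inter_subset_left) hDW

theorem exists_coheirUltrafilter (hM : SmallModel L M) {γ : Type} (c : γ → 𝕄) :
    ∃ W : Ultrafilter (γ → 𝕄), CoheirUltrafilter M W ∧ Realizes L W M c := by
  obtain ⟨W, hW, -, hc⟩ := CoheirUltrafilter.exists_extension hM (α := Empty)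
    (U := pure Empty.elim) (Filter.mem_pure.2 (by simp)) (c := c) (g := Empty.elim)
    (fun D _ hD => Subsingleton.elim Empty.elim (c ∘ Empty.elim) ▸ hD)
  exact ⟨W, hW, hc⟩

/-- The ultrafilter of the product type `U(x) ⊗ W(y)`: a realization is a realization `y` of `W`
together with a realization `x` of `U` over `y`. -/
noncomputable def tensor {α : Type x} {β : Type y} (U : Ultrafilter (α → 𝕄))
    (W : Ultrafilter (β → 𝕄)) : Ultrafilter (α ⊕ β → 𝕄) :=
  W.bind fun y => U.map fun x => Sum.elim x y

variable {α : Type x} {β : Type y} {U : Ultrafilter (α → 𝕄)} {W : Ultrafilter (β → 𝕄)}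

theorem CoheirUltrafilter.tensor (hU : CoheirUltrafilter M U) (hW : CoheirUltrafilter M W) :
    CoheirUltrafilter M (tensor U W) := by
  change ∀ᶠ y in (W : Filter (β → 𝕄)), ∀ᶠ x in (U : Filter (α → 𝕄)), ∀ i, Sum.elim x y i ∈ M
  filter_upwards [hW] with y hy
  filter_upwards [hU] with x hx
  exact Sum.rec hx hy

-- Over `M` the order of the two factors may be exchanged because `W` concentrates on tuples of `M`.
theorem Realizes.tensor (hW : CoheirUltrafilter M W) (hMB : M ⊆ B) {a : α → 𝕄} {b : β → 𝕄}
    (ha : Realizes L U B a) (hb : Realizes L W (B ∪ Set.range a) b) :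
    Realizes L (tensor U W) B (Sum.elim a b) := by
  intro D hD (hDU : ∀ᶠ y in (W : Filter (β → 𝕄)), ∀ᶠ x in (U : Filter (α → 𝕄)), Sum.elim x y ∈ D)
  have hright : (B ∪ Set.range a).Definable L {y : β → 𝕄 | Sum.elim a y ∈ D} := by
    refine definable_union_range_iff.2 ⟨_, hD.preimage_comp Sum.swap, ?_⟩
    ext y
    rw [Set.mem_ofPred_eq, Set.mem_ofPred_eq, Set.mem_preimage, Sum.elim_swap]
  refine hb hright ?_
  filter_upwards [hDU, hW] with y hy hyM
  have hleft : B.Definable L {x : α → 𝕄 | Sum.elim x y ∈ D} := by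
    convert definable_preimage_elim hD (Sum.map id fun i => ⟨y i, hMB (hyM i)⟩) using 4
    ext (_ | _) <;> rfl
  exact ha hleft hy

theorem IsMorleySeq.tensor_self {W : Ultrafilter (β → 𝕄)} (hW : CoheirUltrafilter M W)
    {b : ℕ → β → 𝕄} (hb : IsMorleySeq L M W b) :
    IsMorleySeq L M (tensor W W) fun i => Sum.elim (b (2 * i)) (b (2 * i + 1)) := by
  intro i
  have range_subset {j k : ℕ} (h : j < k) :
      Set.range (b j) ⊆ M ∪ ⋃ j ∈ Set.Iio k, Set.range (b j) :=
    (Set.subset_biUnion_of_mem (s := Set.Iio k) (u := fun j => Set.range (b j)) h).trans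
      Set.subset_union_right
  have past_subset {k : ℕ} (h : 2 * i ≤ k) :
      M ∪ ⋃ j ∈ Set.Iio i, Set.range (Sum.elim (b (2 * j)) (b (2 * j + 1))) ⊆
        M ∪ ⋃ j ∈ Set.Iio k, Set.range (b j) := by
    refine Set.union_subset Set.subset_union_left (Set.iUnion₂_subset fun j hj => ?_)
    rw [Set.Sum.elim_range]
    have : j < i := hj
    exact Set.union_subset (range_subset (by lia)) (range_subset (by lia))
  exact Realizes.tensor hW Set.subset_union_left ((hb (2 * i)).mono (past_subset le_rfl))
    ((hb (2 * i + 1)).mono (Set.union_subset (past_subset (by lia)) (range_subset (by lia))))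

end Coheir

/-! ### Global types as ultrafilters -/

section GlobalTypes

variable {L : FirstOrder.Language.{u, v}} {𝕄 : Type w} [L.Structure 𝕄] {A B M : Set 𝕄}
variable {α : Type x} {U : Ultrafilter (α → 𝕄)}

theorem definable_realize (φ : L.Formula α) : A.Definable L {x : α → 𝕄 | φ.Realize x} :=
  (Set.empty_definable_iff.2 ⟨φ, rfl⟩).mono (Set.empty_subset A)

theorem TpEq.elim_of_forall_mem {β : Type y} {γ : Type z} {b b' : β → 𝕄} (h : TpEq L 𝕄 A b b')
    {m : γ → 𝕄} (hm : ∀ i, m i ∈ A) : TpEq L 𝕄 A (Sum.elim b m) (Sum.elim b' m) := by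
  refine tpEq_iff.2 fun D hD => ?_
  have hfiber : A.Definable L {x : β → 𝕄 | Sum.elim x m ∈ D} := by
    convert definable_preimage_elim hD (Sum.map id fun i => ⟨m i, hm i⟩) using 4
    ext (_ | _) <;> rfl
  exact (h.mem_iff hfiber).1

/-- The global type whose formulas are those defining a set in the ultrafilter `U`. -/
def GlobalType.ofUltrafilter (L : FirstOrder.Language.{u, v}) [L.Structure 𝕄]
    (U : Ultrafilter (α → 𝕄)) : GlobalType L 𝕄 α where
  Mem φ := {x | φ.Realize x} ∈ U
  consistent S hS := ((Filter.eventually_all_finset S).2 hS).exists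
  complete _ := (Ultrafilter.em U _).imp_right id

theorem GlobalType.mem_of_imp (p : GlobalType L 𝕄 α) {φ ψ χ : ParamFormula L 𝕄 α}
    (hφ : p.Mem φ) (hψ : p.Mem ψ) (h : ∀ x, φ.Realize x → ψ.Realize x → χ.Realize x) :
    p.Mem χ := by
  classical
  refine (p.complete χ).resolve_right fun hχ => ?_
  obtain ⟨x, hx⟩ := p.consistent {φ, ψ, χ.not} (by simp [hφ, hψ, hχ])
  exact hx χ.not (by simp) (h x (hx φ (by simp)) (hx ψ (by simp)))

theorem GlobalType.exists_eq_ofUltrafilter (p : GlobalType L 𝕄 α) (X : Set (α → 𝕄))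
    (hX : ∀ φ, p.Mem φ → ∃ x ∈ X, φ.Realize x) : ∃ U, X ∈ U ∧ p = ofUltrafilter L U := by
  have directed : DirectedOn (· ⊇ ·) {D | ∃ φ, p.Mem φ ∧ D = {x | φ.Realize x}} := by
    rintro _ ⟨φ, hφ, rfl⟩ _ ⟨ψ, hψ, rfl⟩
    have definable (φ : ParamFormula L 𝕄 α) : Set.univ.Definable L {x | φ.Realize x} :=
      ParamFormula.ParamsIn.definable fun i => Set.mem_univ _
    obtain ⟨χ, -, hχ⟩ := definable_iff_exists_paramFormula.1 ((definable φ).inter (definable ψ))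
    exact ⟨_, ⟨χ, p.mem_of_imp hφ hψ fun x hx hx' => hχ.le ⟨hx, hx'⟩, rfl⟩,
      hχ.ge.trans Set.inter_subset_left, hχ.ge.trans Set.inter_subset_right⟩
  have nonempty : {D | ∃ φ, p.Mem φ ∧ D = {x | φ.Realize x}}.Nonempty :=
    (p.complete ⟨Empty, ⊤, Empty.elim⟩).elim (fun h => ⟨_, _, h, rfl⟩) fun h => ⟨_, _, h, rfl⟩
  obtain ⟨U, hUX, hU⟩ := exists_ultrafilter_le_forall_mem (f := Filter.principal X) nonempty
    directed (by
      rintro _ ⟨φ, hφ, rfl⟩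
      exact Filter.frequently_principal.2 (hX φ hφ))
  have mem_iff (φ) : p.Mem φ ↔ (ofUltrafilter L U).Mem φ :=
    ⟨fun h => hU _ ⟨φ, h, rfl⟩, fun h => (p.complete φ).resolve_right fun h' =>
      Ultrafilter.compl_mem_iff_notMem.1 (hU _ ⟨_, h', rfl⟩) h⟩
  refine ⟨U, Filter.le_principal_iff.1 hUX, ?_⟩
  cases p
  exact (GlobalType.mk.injEq ..).mpr (funext fun φ => propext (mem_iff φ))

theorem GlobalType.invariantOver_ofUltrafilter_iff :
    (ofUltrafilter L U).InvariantOver M ↔ InvariantUltrafilter L M U := by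
  constructor
  · intro h γ D hD e e' he
    obtain ⟨φ, hφ, rfl⟩ := definable_iff_exists_paramFormula.1 hD
    have := (h _ (φ.subst e).toFormula _ _ (he.elim_of_forall_mem hφ)).1
    change {x | (φ.subst e).Realize x} ∈ U → {x | (φ.subst e').Realize x} ∈ U at this
    simpa only [ParamFormula.realize_subst, Set.mem_ofPred_eq] using this
  · intro h γ ψ e e' he
    exact ⟨h (definable_realize ψ) he, h (definable_realize ψ) he.symm⟩

theorem GlobalType.realizesOver_ofUltrafilter_iff {a : α → 𝕄} :
    (ofUltrafilter L U).RealizesOver B a ↔ Realizes L U B a := by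
  refine ⟨fun h D hD => ?_, fun h φ hφ hpar => h hpar.definable hφ⟩
  obtain ⟨φ, hφ, rfl⟩ := definable_iff_exists_paramFormula.1 hD
  exact fun hU => h φ hU hφ

theorem isInvMorleyOver_iff {b : ℕ → α → 𝕄} :
    IsInvMorleyOver L 𝕄 M b ↔ ∃ U, InvariantUltrafilter L M U ∧ IsMorleySeq L M U b := by
  constructor
  · rintro ⟨p, hp, hb⟩
    obtain ⟨U, -, rfl⟩ := p.exists_eq_ofUltrafilter Set.univ fun φ hφ =>
      (p.consistent {φ} (by simpa using hφ)).imp fun x hx => ⟨trivial, hx φ (by simp)⟩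
    exact ⟨U, GlobalType.invariantOver_ofUltrafilter_iff.1 hp, fun i =>
      GlobalType.realizesOver_ofUltrafilter_iff.1 (hb i)⟩
  · rintro ⟨U, hU, hb⟩
    exact ⟨.ofUltrafilter L U, GlobalType.invariantOver_ofUltrafilter_iff.2 hU, fun i =>
      GlobalType.realizesOver_ofUltrafilter_iff.2 (hb i)⟩

theorem IndFinSat.exists_coheirUltrafilter {c : α → 𝕄} (h : IndFinSat L 𝕄 M B c) :
    ∃ U, CoheirUltrafilter M U ∧ Realizes L U (M ∪ B) c := by
  obtain ⟨p, hp, hc⟩ := h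
  obtain ⟨U, hU, rfl⟩ := p.exists_eq_ofUltrafilter {x | ∀ i, x i ∈ M} hp
  refine ⟨U, hU, fun D hD hDU => ?_⟩
  obtain ⟨φ, hφ, rfl⟩ := definable_iff_exists_paramFormula.1 hD
  exact by_contra fun h => Ultrafilter.compl_mem_iff_notMem.1 (hc φ.not hφ h) hDU

end GlobalTypes

/-! ### Tuples of realizations of a co-NSOP₁ type -/

section CoNSOP1

variable {L : FirstOrder.Language.{u, v}} {𝕄 : Type w} [L.Structure 𝕄] {M : Set 𝕄}

theorem SmallModel.exists_forall_mem_of_antitone (hM : SmallModel L M) {α : Type} [Countable α]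
    {G : ℕ → Set (α → 𝕄)} (hG : Antitone G) (hne : ∀ n, (G n).Nonempty) :
    ∃ x : α → 𝕄, ∀ E, M.Definable L E → ∀ n, G n ⊆ E → x ∈ E := by
  obtain ⟨x, hx⟩ := hM.exists_of_directed (α := α) (γ := Empty) Empty.elim
    (F := {E | M.Definable L E ∧ ∃ n, G n ⊆ (Sum.elim · Empty.elim) ⁻¹' E}) (fun E hE => hE.1)
    ⟨_, Set.definable_univ, 0, Set.subset_univ _⟩
    (by
      rintro E ⟨hE, n, hn⟩ E' ⟨hE', n', hn'⟩
      exact ⟨E ∩ E', ⟨hE.inter hE', max n n', Set.subset_inter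
        ((hG (le_max_left _ _)).trans hn) ((hG (le_max_right _ _)).trans hn')⟩,
        Set.inter_subset_left, Set.inter_subset_right⟩)
    fun E ⟨_, n, hn⟩ => (hne n).imp hn
  exact ⟨x, fun E hE n hn => hx _ ⟨hE.preimage_comp Sum.inl, n, hn⟩⟩

/-- No `M`-definable condition has comb trees of arbitrary height whose nodes are conjugates of the
tuple `b` over `M`. -/
def CombTreeFree (L : FirstOrder.Language.{u, v}) [L.Structure 𝕄] (M : Set 𝕄) {β : Type}
    (b : β → 𝕄) : Prop :=
  ∀ ⦃ξ : Type⦄ [Finite ξ] ⦃D : Set (ξ ⊕ β → 𝕄)⦄, M.Definable L D → ∀ k, ∃ n,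
    ∀ T : List Bool → β → 𝕄, (∀ η, TpEq L 𝕄 M b (T η)) → ¬IsCombTree (ConsistentAlong D) k n T

/-- The coordinates of the tuple `b` are covered by subtuples realizing `P`. -/
def IsRealizationTuple (L : FirstOrder.Language.{u, v}) [L.Structure 𝕄] {nv : ℕ}
    (P : Set (ParamFormula L 𝕄 (Fin nv))) {β : Type} (b : β → 𝕄) : Prop :=
  ∀ i, ∃ f : Fin nv → β, i ∈ Set.range f ∧ RealizesPType L 𝕄 P (b ∘ f)

/-- `P` is a co-NSOP₁ partial type over `M`. -/
structure IsCoNSOP1Type (L : FirstOrder.Language.{u, v}) [L.Structure 𝕄] (M : Set 𝕄) {nv : ℕ}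
    (P : Set (ParamFormula L 𝕄 (Fin nv))) : Prop where
  paramsIn : ∀ φ ∈ P, φ.ParamsIn M
  coNSOP1 : CoNSOP1 L 𝕄 M P

section IsRealizationTuple

variable {nv : ℕ} {P : Set (ParamFormula L 𝕄 (Fin nv))} {β γ ι : Type}

theorem isRealizationTuple_flat_of_realizes {m : ℕ} {b : Fin m → Fin nv → 𝕄}
    (hb : ∀ j, RealizesPType L 𝕄 P (b j)) : IsRealizationTuple L P (flat b) := fun i =>
  ⟨Prod.mk i.1, ⟨i.2, rfl⟩, hb i.1⟩

theorem IsRealizationTuple.congr (hP : IsCoNSOP1Type L M P) {b b' : β → 𝕄}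
    (hbb' : TpEq L 𝕄 M b b') (hb : IsRealizationTuple L P b) : IsRealizationTuple L P b' := by
  intro i
  obtain ⟨f, hf, hbf⟩ := hb i
  exact ⟨f, hf, fun φ hφ => (hbb'.comp f φ (hP.paramsIn φ hφ)).1 (hbf φ hφ)⟩

theorem IsRealizationTuple.sumElim {b : β → 𝕄} {c : γ → 𝕄} (hb : IsRealizationTuple L P b)
    (hc : IsRealizationTuple L P c) : IsRealizationTuple L P (Sum.elim b c) := by
  rintro (i | i)
  · obtain ⟨f, ⟨v, rfl⟩, hf⟩ := hb i
    exact ⟨Sum.inl ∘ f, ⟨v, rfl⟩, hf⟩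
  · obtain ⟨f, ⟨v, rfl⟩, hf⟩ := hc i
    exact ⟨Sum.inr ∘ f, ⟨v, rfl⟩, hf⟩

theorem IsRealizationTuple.flat {b : ι → β → 𝕄} (hb : ∀ i, IsRealizationTuple L P (b i)) :
    IsRealizationTuple L P (flat b) := by
  rintro ⟨i, j⟩
  obtain ⟨f, ⟨v, rfl⟩, hf⟩ := hb i j
  exact ⟨Prod.mk i ∘ f, ⟨v, rfl⟩, hf⟩

end IsRealizationTuple

variable {β ξ : Type} {b : β → 𝕄} {D : Set (ξ ⊕ β → 𝕄)}

theorem exists_isSOP1Tree_of_combTrees {k : ℕ} (hT : ∀ n, ∃ T : List Bool → β → 𝕄,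
      (∀ η, TpEq L 𝕄 M b (T η)) ∧ IsCombTree (ConsistentAlong D) k n T) :
    ∃ K, ∀ h, ∃ t : List Bool → Fin K → β → 𝕄, (∀ η j, TpEq L 𝕄 M b (t η j)) ∧
      IsSOP1Tree (ConsistentAlong D) h fun η => List.ofFn (t η) := by
  have closed : SubsetClosed fun l : List {e // TpEq L 𝕄 M b e} =>
      ConsistentAlong D (l.map Subtype.val) := fun _ _ hl h =>
    h.mono subset_rfl (List.map_subset _ hl)
  obtain ⟨K, hK⟩ := exists_isSOP1Tree closed (k := k) fun n => by
    obtain ⟨T, hTb, hT⟩ := hT n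
    refine ⟨fun η => ⟨T η, hTb η⟩, fun η hη => ⟨?_, fun Y hY hk => ?_⟩⟩ <;> beta_reduce
    · rw [List.map_map]
      exact (hT η hη).1
    · refine (hT η hη).2 _ ?_ (by rwa [List.length_map])
      have := hY.map Subtype.val
      rwa [List.map_map] at this
  refine ⟨K, fun h => ?_⟩
  obtain ⟨t, ht⟩ := hK h
  refine ⟨fun η j => t η j, fun η j => (t η j).2, fun η hη => ?_, fun η₁ η₂ h₁ h₂ => ?_⟩
  · have := ht.consistent η hη
    simp only [List.map_flatMap, List.map_ofFn] at this
    exact this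
  · have := ht.inconsistent η₁ η₂ h₁ h₂
    simp only [List.map_append, List.map_ofFn] at this
    exact this

theorem SmallModel.exists_forall_isSOP1Tree (hM : SmallModel L M) [Countable β]
    (hD : M.Definable L D) {K : ℕ} (ht : ∀ h, ∃ t : List Bool → Fin K → β → 𝕄,
      (∀ η j, TpEq L 𝕄 M b (t η j)) ∧ IsSOP1Tree (ConsistentAlong D) h fun η => List.ofFn (t η)) :
    ∃ t : List Bool → Fin K → β → 𝕄, (∀ η j, TpEq L 𝕄 M b (t η j)) ∧
      ∀ h, IsSOP1Tree (ConsistentAlong D) h fun η => List.ofFn (t η) := by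
  let G : ℕ → Set ((List Bool × Fin K) × β → 𝕄) := fun h => {τ |
    (∀ η j, TpEq L 𝕄 M b (τ ∘ Prod.mk (η, j))) ∧
    IsSOP1Tree (ConsistentAlong D) h fun η => List.ofFn fun j => τ ∘ Prod.mk (η, j)}
  have antitone : Antitone G := fun h h' hle τ hτ =>
    ⟨hτ.1, fun η hη => hτ.2.consistent η (hη.trans hle), fun η₁ η₂ h₁ h₂ =>
      hτ.2.inconsistent η₁ η₂ h₁ (h₂.trans hle)⟩
  obtain ⟨τ, hτ⟩ := hM.exists_forall_mem_of_antitone antitone fun h => by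
    obtain ⟨t, ht⟩ := ht h
    exact ⟨flat fun q => t q.1 q.2, ht⟩
  let nodes : List (List Bool) → List (List Bool × Fin K) :=
    fun l => l.flatMap fun θ => (List.finRange K).map (Prod.mk θ)
  have definable (l : List (List Bool)) : M.Definable L {τ : (List Bool × Fin K) × β → 𝕄 |
      ConsistentAlong D (l.flatMap fun θ => List.ofFn fun j => τ ∘ Prod.mk (θ, j))} := by
    convert definable_consistentAlong hD (nodes l) Prod.mk using 4
    simp only [nodes, List.map_flatMap, List.map_map, List.ofFn_eq_map]
    rfl
  refine ⟨fun η j => τ ∘ Prod.mk (η, j), fun η j => tpEq_iff.2 fun E hE hb => ?_, fun h =>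
    ⟨fun η hη => ?_, fun η₁ η₂ h₁ h₂ => ?_⟩⟩
  · exact hτ _ (hE.preimage_comp (Prod.mk (η, j))) 0 fun τ h => ((h.1 η j).mem_iff hE).1 hb
  · exact hτ _ (definable η.inits) h fun τ h => h.2.consistent η hη
  · have := hτ _ (definable [η₁ ++ [true], η₂]).compl h fun τ hτ => by
      simpa using hτ.2.inconsistent η₁ η₂ h₁ h₂
    simpa using this

theorem ofFn_isPrefix_ofFn {A : Type*} (σ : ℕ → A) {m n : ℕ} (h : m ≤ n) :
    (List.ofFn fun i : Fin m => σ i) <+: List.ofFn fun i : Fin n => σ i := by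
  obtain ⟨d, rfl⟩ := Nat.exists_eq_add_of_le h
  rw [List.ofFn_add]
  exact List.prefix_append _ _

theorem exists_not_isSOP1Tree_of_isCoNSOP1Type {nv : ℕ} {P : Set (ParamFormula L 𝕄 (Fin nv))}
    (hP : IsCoNSOP1Type L M P) [Finite β] [Finite ξ] (hb : IsRealizationTuple L P b)
    (hD : M.Definable L D) {K : ℕ}
    {t : List Bool → Fin K → β → 𝕄} (ht : ∀ η j, TpEq L 𝕄 M b (t η j)) :
    ∃ h, ¬IsSOP1Tree (ConsistentAlong D) h fun η => List.ofFn (t η) := by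
  by_contra! hSOP
  choose f hfv hf using hb
  choose v hv using hfv
  obtain ⟨kx, ⟨ex⟩⟩ := Finite.exists_equiv_fin ξ
  obtain ⟨m, ⟨em⟩⟩ := Finite.exists_equiv_fin (Fin K × β)
  let g : Fin K → ξ ⊕ β → Fin kx ⊕ (Fin m × Fin nv) := fun j =>
    Sum.map ex fun i => (em (j, i), v i)
  obtain ⟨φ, hφ, hφD⟩ := definable_iff_exists_paramFormula.1
    (Set.definable_iInter_of_finite fun j => hD.preimage_comp (g j))
  let e : List Bool → Fin m → Fin nv → 𝕄 := fun η s => t η (em.symm s).1 ∘ f (em.symm s).2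
  have realize_iff (η) (x : Fin kx → 𝕄) :
      (φ.subst (flat (e η))).Realize x ↔ ∀ j, Sum.elim (x ∘ ex) (t η j) ∈ D := by
    have elim_comp (j) : Sum.elim x (flat (e η)) ∘ g j = Sum.elim (x ∘ ex) (t η j) := by
      ext (i | i) <;> simp [g, e, flat, hv]
    rw [ParamFormula.realize_subst, ← Set.mem_ofPred_eq (p := φ.Realize), ← hφD]
    simp [elim_comp]
  refine hP.coNSOP1 ⟨kx, m, φ, e, hφ, fun η s χ hχ => ?_, fun σ s => ?_, fun η₁ η₂ h => ?_⟩
  · exact ((ht η _).comp (f _) χ (hP.paramsIn χ hχ)).1 (hf _ χ hχ)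
  · let η := List.ofFn fun i : Fin (s.sup id) => σ i
    obtain ⟨x, hx⟩ := (hSOP η.length).consistent η le_rfl
    refine ⟨x ∘ ex.symm, fun n hn => (realize_iff _ _).2 fun j => ?_⟩
    rw [Function.comp_assoc, Equiv.symm_comp_self, Function.comp_id]
    exact hx _ (List.mem_flatMap.2 ⟨_, (List.mem_inits _ _).2 (ofFn_isPrefix_ofFn σ
      (Finset.le_sup (f := id) hn)), List.mem_ofFn.2 ⟨j, rfl⟩⟩)
  · rintro ⟨x, hx₂, hx₁⟩
    rw [realize_iff] at hx₁ hx₂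
    refine (hSOP η₂.length).inconsistent η₁ η₂ h le_rfl ⟨x ∘ ex, fun y hy => ?_⟩
    obtain hy | hy := List.mem_append.1 hy <;> obtain ⟨j, rfl⟩ := List.mem_ofFn.1 hy
    · exact hx₁ j
    · exact hx₂ j

theorem IsRealizationTuple.combTreeFree (hM : SmallModel L M) {nv : ℕ}
    {P : Set (ParamFormula L 𝕄 (Fin nv))} (hP : IsCoNSOP1Type L M P) [Finite β]
    (hb : IsRealizationTuple L P b) : CombTreeFree L M b := by
  intro ξ _ D hD k
  by_contra! hT
  obtain ⟨K, ht⟩ := exists_isSOP1Tree_of_combTrees hT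
  obtain ⟨t, htb, ht⟩ := hM.exists_forall_isSOP1Tree hD ht
  obtain ⟨h, hh⟩ := exists_not_isSOP1Tree_of_isCoNSOP1Type hP hb hD htb
  exact hh (ht h)

end CoNSOP1

/-! ### Kim's lemma for invariant types -/

section Kim

variable {L : FirstOrder.Language.{u, v}} {𝕄 : Type w} [L.Structure 𝕄] {M : Set 𝕄}

theorem SmallModel.exists_tpEq_comp_eq (hM : SmallModel L M) {α γ : Type} [Countable α]
    [Countable γ] {g : γ → α} {y : α → 𝕄} {x : γ → 𝕄} (h : TpEq L 𝕄 M (y ∘ g) x) :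
    ∃ y', TpEq L 𝕄 M y y' ∧ y' ∘ g = x := by
  obtain ⟨y', hy'⟩ := hM.exists_tpEq_elim h y
  refine ⟨y', hy'.comp Sum.inl, funext fun i => ?_⟩
  exact (hy'.mem_iff (Set.DefinableFun.ofPred_eq (Set.DefinableFun.proj L (i := Sum.inl (g i)))
    (Set.DefinableFun.proj L (i := Sum.inr i)))).1 rfl

theorem iUnion_mem_map_range_eq {ι : Type x} {β : Type y} (T : ι → β → 𝕄) (l : List ι) :
    ⋃ y ∈ l.map T, Set.range y = Set.range (flat fun i : {i // i ∈ l} => T i) := by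
  ext m
  simp [flat]

theorem IsMorleyList.congr {β ι : Type} {U : Ultrafilter (β → 𝕄)} (hU : InvariantUltrafilter L M U)
    {T T' : ι → β → 𝕄} (h : TpEq L 𝕄 M (flat T) (flat T')) {l : List ι}
    (hl : IsMorleyList L M U (l.map T)) : IsMorleyList L M U (l.map T') := by
  induction l with
  | nil => trivial
  | cons i l ih =>
    obtain ⟨hl, hi⟩ := hl
    refine ⟨ih hl, ?_⟩
    rw [iUnion_mem_map_range_eq] at hi ⊢
    refine hi.congr_elim hU ?_
    convert h.comp (Sum.elim (Prod.mk i) fun q : {j // j ∈ l} × β => (q.1.1, q.2)) using 1 <;>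
      ext (_ | _) <;> rfl

theorem iUnion_mem_map_range_subset {ι : Type x} {β : Type y} (T : ι → β → 𝕄) (l : List ι) :
    ⋃ y ∈ l.map T, Set.range y ⊆ Set.range (flat T) := by
  rw [iUnion_mem_map_range_eq]
  rintro _ ⟨q, rfl⟩
  exact ⟨(q.1.1, q.2), rfl⟩

/-- A tree of conjugates of `b` over `M` in which, for every node of length `n`, the path to it is a
Morley sequence in the type given by `U` and the right siblings of its left turns form one in the
type given by `W`. -/
structure IsMorleyTree (L : FirstOrder.Language.{u, v}) [L.Structure 𝕄] (M : Set 𝕄) {β : Type}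
    (b : β → 𝕄) (U W : Ultrafilter (β → 𝕄)) (n : ℕ) (T : List Bool → β → 𝕄) : Prop where
  tpEq : ∀ η, TpEq L 𝕄 M b (T η)
  path : ∀ η : List Bool, η.length = n → IsMorleyList L M U (η.inits.map T)
  comb : ∀ η : List Bool, η.length = n → IsMorleyList L M W ((rightSiblings η).map T)

variable {β ξ : Type} {b : β → 𝕄} {U W : Ultrafilter (β → 𝕄)}

theorem IsMorleyTree.joinTree {n : ℕ} {T₀ T₁ : List Bool → β → 𝕄} {r : β → 𝕄}
    (hU : InvariantUltrafilter L M U) (hW : InvariantUltrafilter L M W)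
    (hT₀ : IsMorleyTree L M b U W n T₀) (hT : TpEq L 𝕄 M (flat T₀) (flat T₁))
    (hT₁ : Realizes L W (M ∪ Set.range (flat T₀)) (T₁ [])) (hbr : TpEq L 𝕄 M b r)
    (hr : Realizes L U (M ∪ (Set.range (flat T₀) ∪ Set.range (flat T₁))) r) :
    IsMorleyTree L M b U W (n + 1) (joinTree r T₀ T₁) where
  tpEq
    | [] => hbr
    | false :: η => hT₀.tpEq η
    | true :: η => (hT₀.tpEq η).trans (hT.comp (Prod.mk η))
  path
    | i :: η, hη => by
      have path := hT₀.path η (Nat.succ.inj hη)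
      rw [map_inits_joinTree]
      cases i
      · exact ⟨path, hr.mono <| Set.union_subset_union_right _ <|
          (iUnion_mem_map_range_subset _ _).trans Set.subset_union_left⟩
      · exact ⟨path.congr hU hT, hr.mono <| Set.union_subset_union_right _ <|
          (iUnion_mem_map_range_subset _ _).trans Set.subset_union_right⟩
  comb
    | false :: η, hη => by
      rw [map_rightSiblings_joinTree_false]
      exact ⟨hT₀.comb η (Nat.succ.inj hη), hT₁.mono <|
        Set.union_subset_union_right _ (iUnion_mem_map_range_subset _ _)⟩
    | true :: η, hη => by
      rw [map_rightSiblings_joinTree_true]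
      exact (hT₀.comb η (Nat.succ.inj hη)).congr hW hT

theorem exists_isMorleyTree [Countable β] (hM : SmallModel L M) (hU : InvariantUltrafilter L M U)
    (hW : InvariantUltrafilter L M W) (hUb : Realizes L U M b) (hWb : Realizes L W M b) (n : ℕ) :
    ∃ T, IsMorleyTree L M b U W n T := by
  induction n with
  | zero =>
    refine ⟨fun _ => b, fun _ => TpEq.refl b, fun η hη => ?_, fun η hη => ?_⟩ <;>
      obtain rfl := List.length_eq_zero_iff.1 hη
    · exact ⟨trivial, hUb.mono (by simp)⟩
    · trivial
  | succ n ih =>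
    obtain ⟨T₀, hT₀⟩ := ih
    obtain ⟨e, he⟩ := exists_realizes hM W (Set.countable_range (flat T₀))
    have root_tpEq : TpEq L 𝕄 M (flat T₀ ∘ Prod.mk []) e :=
      (hT₀.tpEq []).symm.trans (hWb.tpEq (he.mono Set.subset_union_left))
    obtain ⟨y, hy, hye⟩ := hM.exists_tpEq_comp_eq root_tpEq
    let T₁ : List Bool → β → 𝕄 := fun η => y ∘ Prod.mk η
    obtain ⟨r, hr⟩ := exists_realizes hM U
      ((Set.countable_range (flat T₀)).union (Set.countable_range (flat T₁)))
    exact ⟨_, hT₀.joinTree hU hW (T₁ := T₁) hy (by rwa [← hye] at he)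
      (hUb.tpEq (hr.mono Set.subset_union_left)) hr⟩

theorem CombTreeFree.morleyConsistent [Countable β] (hM : SmallModel L M)
    (hb : CombTreeFree L M b) (hU : InvariantUltrafilter L M U) (hW : InvariantUltrafilter L M W)
    (hUb : Realizes L U M b) (hWb : Realizes L W M b) [Finite ξ] {D : Set (ξ ⊕ β → 𝕄)}
    (hD : M.Definable L D) (h : MorleyConsistent L M U D) : MorleyConsistent L M W D := by
  by_contra hc
  obtain ⟨k, hk⟩ := exists_length_bound_of_not_morleyConsistent hM hW hD hc
  obtain ⟨n, hn⟩ := hb hD k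
  obtain ⟨T, hT⟩ := exists_isMorleyTree hM hU hW hUb hWb n
  refine hn T hT.tpEq fun η hη => ⟨h _ (hT.path η hη), fun Y hY hYk hYc => ?_⟩
  exact (hk Y ((hT.comb η hη).sublist hY) hYc).ne hYk

end Kim

/-! ### Symmetry of hereditary independence -/

section Symm

variable {L : FirstOrder.Language.{u, v}} {𝕄 : Type w} [L.Structure 𝕄] {M : Set 𝕄}

/-- Hereditary independence of `a` from `b` over `M`: every `M`-definable condition satisfied by `a`
and `b` is consistent along all Morley sequences in `M`-invariant types extending the type of
`b`. -/
def HereditaryInd (L : FirstOrder.Language.{u, v}) [L.Structure 𝕄] (M : Set 𝕄) {α β : Type}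
    (a : α → 𝕄) (b : β → 𝕄) : Prop :=
  ∀ ⦃D : Set (α ⊕ β → 𝕄)⦄, M.Definable L D → Sum.elim a b ∈ D → ∀ ⦃U : Ultrafilter (β → 𝕄)⦄,
    InvariantUltrafilter L M U → Realizes L U M b → MorleyConsistent L M U D

/-- The condition on `x` and a family `y` of tuples that `x` and every member of `y` satisfy `D`. -/
def blockInter (ι : Type) {α β : Type} (D : Set (α ⊕ β → 𝕄)) : Set (α ⊕ (ι × β) → 𝕄) :=
  ⋂ i, (· ∘ Sum.map id (Prod.mk i)) ⁻¹' D

/-- Every `M`-definable condition satisfied by `a` and `b` holds simultaneously at all members of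
the family `B`, consistently along Morley sequences in `M`-invariant types extending the type of the
family. -/
def JointlyInd (L : FirstOrder.Language.{u, v}) [L.Structure 𝕄] (M : Set 𝕄) {ι α β : Type}
    (a : α → 𝕄) (b : β → 𝕄) (B : ι → β → 𝕄) : Prop :=
  ∀ ⦃D : Set (α ⊕ β → 𝕄)⦄, M.Definable L D → Sum.elim a b ∈ D →
    ∀ ⦃U : Ultrafilter (ι × β → 𝕄)⦄, InvariantUltrafilter L M U → Realizes L U M (flat B) →
      MorleyConsistent L M U (blockInter ι D)

variable {ι α β : Type} {a : α → 𝕄} {b : β → 𝕄} {D : Set (α ⊕ β → 𝕄)}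

theorem elim_mem_blockInter_iff {x : α → 𝕄} {y : ι × β → 𝕄} :
    Sum.elim x y ∈ blockInter ι D ↔ ∀ i, Sum.elim x (y ∘ Prod.mk i) ∈ D := by
  simp [blockInter, Sum.elim_comp_map]

theorem definable_blockInter [Finite ι] (hD : M.Definable L D) :
    M.Definable L (blockInter ι D) :=
  Set.definable_iInter_of_finite fun _ => hD.preimage_comp _

theorem blockInter_inter (D D' : Set (α ⊕ β → 𝕄)) :
    blockInter ι (D ∩ D') = blockInter ι D ∩ blockInter ι D' := by
  simp only [blockInter, Set.preimage_inter, Set.iInter_inter_distrib]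

theorem MorleyConsistent.mono {ξ : Type y} {U : Ultrafilter (β → 𝕄)} {D D' : Set (ξ ⊕ β → 𝕄)}
    (h : MorleyConsistent L M U D) (hD : D ⊆ D') : MorleyConsistent L M U D' :=
  fun l hl => (h l hl).mono hD (List.Subset.refl l)

theorem HereditaryInd.jointlyInd_const [Subsingleton ι] (i₀ : ι) [Countable β]
    (hM : SmallModel L M) (h : HereditaryInd L M a b) : JointlyInd L M a b fun _ : ι => b := by
  intro D hD hab U hU hUb
  refine ((morleyConsistent_map hM hU hD (Prod.mk i₀)).1
    (h hD hab (hU.map _) (hUb.map _))).mono fun y hy => Set.mem_iInter.2 fun i => ?_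
  rwa [Subsingleton.elim i i₀]

theorem JointlyInd.exists_tpEq [Finite ι] [Countable α] [Countable β] (hM : SmallModel L M)
    {B : ι → β → 𝕄} (h : JointlyInd L M a b B) {U : Ultrafilter (ι × β → 𝕄)}
    (hU : InvariantUltrafilter L M U) (hUB : Realizes L U M (flat B)) {Bs : ℕ → ι → β → 𝕄}
    (hBs : IsMorleySeq L M U fun n => flat (Bs n)) :
    ∃ a₀, ∀ n i, TpEq L 𝕄 M (Sum.elim a b) (Sum.elim a₀ (Bs n i)) := by
  obtain ⟨a₀, ha₀⟩ := MorleyConsistent.exists_forall_mem hM hBs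
    (F := blockInter ι '' {D | M.Definable L D ∧ Sum.elim a b ∈ D})
    (by rintro _ ⟨D, ⟨hD, -⟩, rfl⟩; exact definable_blockInter hD)
    (Set.Nonempty.image _ ⟨Set.univ, Set.definable_univ, trivial⟩)
    (by
      rintro _ ⟨D, ⟨hD, hab⟩, rfl⟩ _ ⟨D', ⟨hD', hab'⟩, rfl⟩
      refine ⟨_, ⟨D ∩ D', ⟨hD.inter hD', hab, hab'⟩, rfl⟩, ?_⟩
      rw [blockInter_inter]
      exact ⟨Set.inter_subset_left, Set.inter_subset_right⟩)
    (by rintro _ ⟨D, ⟨hD, hab⟩, rfl⟩; exact h hD hab hU hUB)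
  exact ⟨a₀, fun n i => tpEq_iff.2 fun D hD hab =>
    elim_mem_blockInter_iff.1 (ha₀ n _ ⟨D, ⟨hD, hab⟩, rfl⟩) i⟩

-- The pairs `(Bs (2 * n), Bs (2 * n + 1))` form a Morley sequence all of whose members are
-- conjugate to `b` over `a₀`, so Kim's lemma applies to it.
theorem JointlyInd.of_isMorleySeq [Finite α] [Countable β] (hM : SmallModel L M)
    {ι' : Type} [Finite ι'] {U : Ultrafilter (ι × β → 𝕄)} (hU : CoheirUltrafilter M U)
    {Bs : ℕ → ι → β → 𝕄} (hBs : IsMorleySeq L M U fun n => flat (Bs n)) {a₀ : α → 𝕄}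
    (ha₀ : ∀ n i, TpEq L 𝕄 M (Sum.elim a b) (Sum.elim a₀ (Bs n i))) (f : ι' → ι ⊕ ι)
    (hfree : CombTreeFree L M (flat (Sum.elim (Bs 0) (Bs 1) ∘ f))) :
    JointlyInd L M a b (Sum.elim (Bs 0) (Bs 1) ∘ f) := by
  intro D hD hab W hW hWB
  let g : ι' × β → (ι × β) ⊕ (ι × β) := fun q => Sum.map (·, q.2) (·, q.2) (f q.1)
  have elim_comp_g (m n : ℕ) : Sum.elim (flat (Bs m)) (flat (Bs n)) ∘ g =
      flat (Sum.elim (Bs m) (Bs n) ∘ f) := by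
    ext ⟨i, j⟩
    rcases h : f i with k | k <;> simp [g, flat, h]
  have hmor := (hBs.tensor_self hU).map g
  have hinv := ((hU.tensor hU).invariantUltrafilter (L := L)).map g
  simp only [elim_comp_g] at hmor
  refine hfree.morleyConsistent hM hinv hW ((hmor 0).mono Set.subset_union_left) hWB
    (definable_blockInter hD) (hmor.morleyConsistent hM hinv (definable_blockInter hD)
      fun N => ⟨a₀, fun e he => ?_⟩)
  obtain ⟨n, -, rfl⟩ := List.mem_map.1 he
  refine elim_mem_blockInter_iff.2 fun i => ?_
  change Sum.elim a₀ (Sum.elim (Bs (2 * n)) (Bs (2 * n + 1)) (f i)) ∈ D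
  rcases f i with k | k <;> exact ((ha₀ _ k).mem_iff hD).1 hab

/-- Trees built in the proof that hereditary independence is symmetric: the nodes `T η` are
conjugates of `a` and carry combs that are Morley in the type given by `U`, while `B η` is a leaf,
sitting above the node `η` of length `n`, that is conjugate to `b` over every node below it. -/
structure IsSymmTree (L : FirstOrder.Language.{u, v}) [L.Structure 𝕄] (M : Set 𝕄) {α β : Type}
    (a : α → 𝕄) (b : β → 𝕄) (U : Ultrafilter (α → 𝕄)) (n : ℕ) (T : List Bool → α → 𝕄)
    (B : List.Vector Bool n → β → 𝕄) : Prop where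
  tpEq : ∀ η, TpEq L 𝕄 M a (T η)
  tpEq_elim : ∀ η : List.Vector Bool n, ∀ t ∈ η.toList.inits.map T,
    TpEq L 𝕄 M (Sum.elim a b) (Sum.elim t (B η))
  comb : ∀ η : List.Vector Bool n, IsMorleyList L M U ((rightSiblings η.toList).map T)

variable {U : Ultrafilter (α → 𝕄)} {n : ℕ} {T T₀ T₁ : List Bool → α → 𝕄}
  {B B₀ B₁ : List.Vector Bool n → β → 𝕄}

/-- The subtree below a vertex at level one, and the position in it. -/
def splitVector (η : List.Vector Bool (n + 1)) : List.Vector Bool n ⊕ List.Vector Bool n :=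
  bif η.head then Sum.inr η.tail else Sum.inl η.tail

theorem isSymmTree_zero : IsSymmTree L M a b U 0 (fun _ => a) fun _ => b where
  tpEq _ := TpEq.refl a
  tpEq_elim η t ht := by
    obtain ⟨_, -, rfl⟩ := List.mem_map.1 ht
    exact TpEq.refl _
  comb η := by
    rw [Subsingleton.elim η List.Vector.nil]
    trivial

theorem IsSymmTree.congr (hU : InvariantUltrafilter L M U) (hT : IsSymmTree L M a b U n T B)
    (h : TpEq L 𝕄 M (Sum.elim (flat T) (flat B)) (Sum.elim (flat T₀) (flat B₀))) :
    IsSymmTree L M a b U n T₀ B₀ where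
  tpEq η := (hT.tpEq η).trans (h.comp (Sum.inl ∘ Prod.mk η))
  tpEq_elim η t ht := by
    obtain ⟨θ, hθ, rfl⟩ := List.mem_map.1 ht
    exact (hT.tpEq_elim η _ (List.mem_map_of_mem hθ)).trans (h.elim_comp (Prod.mk θ) (Prod.mk η))
  comb η := (hT.comb η).congr hU (h.comp Sum.inl)

theorem IsSymmTree.joinTree (hT₀ : IsSymmTree L M a b U n T₀ B₀)
    (hT₁ : IsSymmTree L M a b U n T₁ B₁) (hroot : Realizes L U (M ∪ Set.range (flat T₀)) (T₁ []))
    {a₀ : α → 𝕄} (ha₀ : ∀ i, TpEq L 𝕄 M (Sum.elim a b) (Sum.elim a₀ (Sum.elim B₀ B₁ i))) :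
    IsSymmTree L M a b U (n + 1) (joinTree a₀ T₀ T₁) (Sum.elim B₀ B₁ ∘ splitVector) where
  tpEq
    | [] => (ha₀ (Sum.inl (List.Vector.replicate n false))).comp Sum.inl
    | false :: η => hT₀.tpEq η
    | true :: η => hT₁.tpEq η
  tpEq_elim η t ht := by
    obtain ⟨i, η, rfl⟩ := η.exists_eq_cons
    rw [List.Vector.toList_cons, map_inits_joinTree] at ht
    obtain rfl | ht := List.mem_cons.1 ht
    · exact ha₀ _
    · cases i
      · exact hT₀.tpEq_elim η t ht
      · exact hT₁.tpEq_elim η t ht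
  comb η := by
    obtain ⟨_ | _, η, rfl⟩ := η.exists_eq_cons <;> rw [List.Vector.toList_cons]
    · rw [map_rightSiblings_joinTree_false]
      exact ⟨hT₀.comb η, hroot.mono <|
        Set.union_subset_union_right _ (iUnion_mem_map_range_subset _ _)⟩
    · rw [map_rightSiblings_joinTree_true]
      exact hT₁.comb η

theorem exists_isSymmTree (hM : SmallModel L M) [Finite α] [Countable β]
    (hfree : ∀ (ι : Type) [Finite ι] (B : ι → β → 𝕄), (∀ i, TpEq L 𝕄 M b (B i)) →
      CombTreeFree L M (flat B))
    (h : HereditaryInd L M a b) (hU : CoheirUltrafilter M U) (hUa : Realizes L U M a) (n : ℕ) :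
    ∃ T B, IsSymmTree L M a b U n T B ∧ JointlyInd L M a b B := by
  induction n with
  | zero => exact ⟨_, _, isSymmTree_zero, h.jointlyInd_const List.Vector.nil hM⟩
  | succ n ih =>
    obtain ⟨T, B, hT, hB⟩ := ih
    let g : α → (List Bool × α) ⊕ (List.Vector Bool n × β) := Sum.inl ∘ Prod.mk []
    obtain ⟨W, hW, hWU, hWc⟩ := hU.exists_extension hM (c := Sum.elim (flat T) (flat B)) (g := g)
      (hUa.congr (hT.tpEq []))
    obtain ⟨cs, hcs⟩ := exists_isMorleySeq hM W
    let Ts : ℕ → List Bool → α → 𝕄 := fun i η => cs i ∘ Sum.inl ∘ Prod.mk η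
    let Bs : ℕ → List.Vector Bool n → β → 𝕄 := fun i η => cs i ∘ Sum.inr ∘ Prod.mk η
    have tree (i) : IsSymmTree L M a b U n (Ts i) (Bs i) := by
      refine hT.congr hU.invariantUltrafilter ?_
      convert hWc.tpEq ((hcs i).mono Set.subset_union_left) using 1
      ext (_ | _) <;> rfl
    have hBs : IsMorleySeq L M (W.map (· ∘ Sum.inr)) fun i => flat (Bs i) := hcs.map Sum.inr
    obtain ⟨a₀, ha₀⟩ := hB.exists_tpEq hM (hW.map Sum.inr).invariantUltrafilter
      (hWc.map Sum.inr) hBs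
    have root : Realizes L U (M ∪ Set.range (flat (Ts 0))) (Ts 1 []) := by
      rw [← hWU]
      refine ((hcs 1).map g).mono (Set.union_subset_union_right _ ?_)
      rintro _ ⟨q, rfl⟩
      exact Set.mem_biUnion (Set.mem_Iio.2 Nat.zero_lt_one) ⟨Sum.inl q, rfl⟩
    have ha₀' (i) : TpEq L 𝕄 M (Sum.elim a b) (Sum.elim a₀ (Sum.elim (Bs 0) (Bs 1) i)) :=
      Sum.rec (ha₀ 0) (ha₀ 1) i
    exact ⟨_, _, (tree 0).joinTree (tree 1) root ha₀',
      .of_isMorleySeq hM (hW.map Sum.inr) hBs ha₀ splitVector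
        (hfree _ _ fun i => (ha₀' (splitVector i)).comp Sum.inr)⟩

theorem HereditaryInd.symm (hM : SmallModel L M) [Finite α] [Finite β]
    (ha : CombTreeFree L M a)
    (hb : ∀ (ι : Type) [Finite ι] (B : ι → β → 𝕄), (∀ i, TpEq L 𝕄 M b (B i)) →
      CombTreeFree L M (flat B))
    (h : HereditaryInd L M a b) : HereditaryInd L M b a := by
  intro D hD hba U hU hUa
  obtain ⟨W, hW, hWa⟩ := exists_coheirUltrafilter (L := L) hM a
  refine ha.morleyConsistent hM hW.invariantUltrafilter hU hWa hUa hD ?_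
  by_contra hc
  obtain ⟨k, hk⟩ :=
    exists_length_bound_of_not_morleyConsistent hM hW.invariantUltrafilter hD hc
  obtain ⟨n, hn⟩ := ha hD k
  obtain ⟨T, B, hT, -⟩ := exists_isSymmTree hM hb h hW hWa n
  refine hn T hT.tpEq fun η hη => ?_
  let η' : List.Vector Bool n := ⟨η, hη⟩
  refine ⟨⟨B η', fun t ht => ?_⟩, fun Y hY hYk hYc =>
    (hk Y ((hT.comb η').sublist hY) hYc).ne hYk⟩
  exact ((hT.tpEq_elim η' t ht).elim_swap.mem_iff hD).1 hba

end Symm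

/-! ### Amalgamation -/

section Amalgamation

variable {L : FirstOrder.Language.{u, v}} {𝕄 : Type w} [L.Structure 𝕄] {M : Set 𝕄}

/-- Every `M`-definable property of `a` holds at infinitely many terms of the sequence `s`. -/
def IsLimitTuple (L : FirstOrder.Language.{u, v}) [L.Structure 𝕄] (M : Set 𝕄) {α : Type x}
    (s : ℕ → α → 𝕄) (a : α → 𝕄) : Prop :=
  ∀ ⦃D : Set (α → 𝕄)⦄, M.Definable L D → a ∈ D → ∃ᶠ n in Filter.atTop, s n ∈ D

theorem exists_isLimitTuple_elim (hM : SmallModel L M) {α γ : Type} [Countable α] [Countable γ]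
    (s : ℕ → α → 𝕄) (e : γ → 𝕄) :
    ∃ a, IsLimitTuple L M (fun n => Sum.elim (s n) e) (Sum.elim a e) := by
  obtain ⟨a, ha⟩ := exists_realizes hM ((Filter.hyperfilter ℕ).map s) (Set.countable_range e)
  refine ⟨a, fun D hD haD => ?_⟩
  have hmem : ∀ᶠ n in Filter.hyperfilter ℕ, Sum.elim (s n) e ∈ D :=
    (ha.mem_iff (definable_union_range_iff.2 ⟨D, hD, rfl⟩)).2 haD
  rw [← Nat.cofinite_eq_atTop]
  exact hmem.frequently.filter_mono Filter.hyperfilter_le_cofinite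

theorem IsMorleySeq.tpEq_elim_comp {β γ δ : Type} {U : Ultrafilter (δ → 𝕄)} {d : ℕ → δ → 𝕄}
    (hd : IsMorleySeq L M U d) {g : β → δ} {g' : γ → δ}
    (hU : InvariantUltrafilter L M (U.map (· ∘ g'))) {b : β → 𝕄} {c : γ → 𝕄} {m n : ℕ}
    (hb : TpEq L 𝕄 M b (d m ∘ g)) (hc : Realizes L (U.map (· ∘ g')) (M ∪ Set.range b) c)
    (hmn : m < n) : TpEq L 𝕄 M (Sum.elim b c) (Sum.elim (d m ∘ g) (d n ∘ g')) := by
  have hrange : Set.range (d m ∘ g) ⊆ ⋃ j ∈ Set.Iio n, Set.range (d j) :=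
    (Set.range_comp_subset_range _ _).trans
      (Set.subset_biUnion_of_mem (u := fun j => Set.range (d j)) hmn)
  exact (Realizes.tpEq_elim hU hb hc
    (((hd n).map g').mono (Set.union_subset_union_right _ hrange))).elim_swap

section IsLimitTuple

variable {α : Type x} {γ : Type y} {s : ℕ → α → 𝕄} {a : α → 𝕄}

theorem IsLimitTuple.comp (ha : IsLimitTuple L M s a) (g : γ → α) :
    IsLimitTuple L M (fun n => s n ∘ g) (a ∘ g) :=
  fun _ hD => ha (hD.preimage_comp g)

theorem IsLimitTuple.tpEq (ha : IsLimitTuple L M s a) {x : α → 𝕄}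
    (hs : ∀ n, TpEq L 𝕄 M x (s n)) : TpEq L 𝕄 M x a :=
  .symm <| tpEq_iff.2 fun _ hD haD =>
    let ⟨n, hn⟩ := (ha hD haD).exists
    ((hs n).mem_iff hD).2 hn

theorem IsLimitTuple.tpEq_elim_comp {β δ ε : Type*} {s : ℕ → β → 𝕄} {a : β → 𝕄} {e : γ → 𝕄}
    (ha : IsLimitTuple L M (fun n => Sum.elim (s n) e) (Sum.elim a e)) (g : δ → β) (g' : ε → γ)
    {x : δ → 𝕄} {y : ε → 𝕄}
    (hs : ∀ n, TpEq L 𝕄 M (Sum.elim x y) (Sum.elim (s n ∘ g) (e ∘ g'))) :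
    TpEq L 𝕄 M (Sum.elim x y) (Sum.elim (a ∘ g) (e ∘ g')) := by
  have := ha.comp (Sum.map g g')
  simp only [Sum.elim_comp_map] at this
  exact this.tpEq hs

end IsLimitTuple

variable {α β γ : Type} {a : α → 𝕄} {b : β → 𝕄}

theorem CombTreeFree.hereditaryInd_of_isLimitTuple (hM : SmallModel L M) [Finite α] [Countable β]
    (hb : CombTreeFree L M b) {U : Ultrafilter (β → 𝕄)} (hU : InvariantUltrafilter L M U)
    (hUb : Realizes L U M b) {bs : ℕ → β → 𝕄} (hbs : IsMorleySeq L M U bs)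
    (hlim : IsLimitTuple L M (fun n => Sum.elim (bs n) a) (Sum.elim b a)) :
    HereditaryInd L M a b := by
  intro D hD hab W hW hWb
  obtain ⟨g, hg, hgD⟩ := Filter.extraction_of_frequently_atTop
    (hlim (hD.preimage_comp Sum.swap) (by simpa using hab))
  refine hb.morleyConsistent hM hU hW hUb hWb hD
    ((hbs.comp_strictMono hg).morleyConsistent hM hU hD fun N => ⟨a, fun e he => ?_⟩)
  obtain ⟨n, -, rfl⟩ := List.mem_map.1 he
  simpa using hgD n

theorem HereditaryInd.congr {a' : α → 𝕄} {b' : β → 𝕄} (hab : HereditaryInd L M a b)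
    (h : TpEq L 𝕄 M (Sum.elim a b) (Sum.elim a' b')) : HereditaryInd L M a' b' :=
  fun _ hD hD' _ hU hUb =>
    hab hD ((h.mem_iff hD).2 hD') hU (hUb.congr (h.comp Sum.inr).symm)

theorem HereditaryInd.exists_tpEq [Countable α] [Countable β] (hM : SmallModel L M)
    (hab : HereditaryInd L M a b) {U : Ultrafilter (β → 𝕄)} (hU : InvariantUltrafilter L M U)
    (hUb : Realizes L U M b) {bs : ℕ → β → 𝕄} (hbs : IsMorleySeq L M U bs) :
    ∃ a₀, ∀ n, TpEq L 𝕄 M (Sum.elim a b) (Sum.elim a₀ (bs n)) := by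
  obtain ⟨a₀, ha₀⟩ := MorleyConsistent.exists_forall_mem hM hbs
    (F := {D | M.Definable L D ∧ Sum.elim a b ∈ D}) (fun D hD => hD.1)
    ⟨Set.univ, Set.definable_univ, trivial⟩
    (fun D hD D' hD' => ⟨D ∩ D', ⟨hD.1.inter hD'.1, hD.2, hD'.2⟩, Set.inter_subset_left,
      Set.inter_subset_right⟩)
    (fun D hD => hab hD.1 hD.2 hU hUb)
  exact ⟨a₀, fun n => tpEq_iff.2 fun D hD hD' => ha₀ n D ⟨hD, hD'⟩⟩

variable [Finite α] [Finite β] {nv₁ nv₂ : ℕ} {P : Set (ParamFormula L 𝕄 (Fin nv₁))}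
  {Q : Set (ParamFormula L 𝕄 (Fin nv₂))}

theorem IsRealizationTuple.hereditaryInd_symm (hM : SmallModel L M) (hP : IsCoNSOP1Type L M P)
    (hQ : IsCoNSOP1Type L M Q) (ha : IsRealizationTuple L P a) (hb : IsRealizationTuple L Q b)
    (hab : HereditaryInd L M a b) : HereditaryInd L M b a :=
  hab.symm hM (ha.combTreeFree hM hP) fun _ _ _ hB =>
    (IsRealizationTuple.flat fun i => hb.congr hQ (hB i)).combTreeFree hM hQ

variable [Finite γ] {a' : α → 𝕄} {c : γ → 𝕄}

theorem HereditaryInd.exists_amalgam (hM : SmallModel L M) (hP : IsCoNSOP1Type L M P)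
    (hQ : IsCoNSOP1Type L M Q) (ha : IsRealizationTuple L P a) (hb : IsRealizationTuple L Q b)
    (hc : IsRealizationTuple L Q c) (haa' : TpEq L 𝕄 M a a') (hab : HereditaryInd L M a b)
    (hac : HereditaryInd L M a' c) :
    ∃ (a₁ : α → 𝕄) (b₁ : β → 𝕄) (c₁ : γ → 𝕄), TpEq L 𝕄 M (Sum.elim a b) (Sum.elim a₁ b₁) ∧
      TpEq L 𝕄 M (Sum.elim a' c) (Sum.elim a₁ c₁) ∧ HereditaryInd L M a₁ (Sum.elim b₁ c₁) := by
  have hba := ha.hereditaryInd_symm hM hP hQ hb hab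
  have hca := (ha.congr hP haa').hereditaryInd_symm hM hP hQ hc hac
  obtain ⟨U, hU, hUa⟩ := exists_coheirUltrafilter (L := L) hM a
  have hUinv := hU.invariantUltrafilter (L := L)
  obtain ⟨as, has⟩ := exists_isMorleySeq hM U
  obtain ⟨b₁, hb₁⟩ := hba.exists_tpEq hM hUinv hUa has
  obtain ⟨c₁, hc₁⟩ := hca.exists_tpEq hM hUinv (hUa.congr haa') has
  obtain ⟨a₁, ha₁⟩ := exists_isLimitTuple_elim hM as (Sum.elim b₁ c₁)
  have haa₁ : TpEq L 𝕄 M a a₁ := (ha₁.comp Sum.inl).tpEq fun n => (hb₁ n).comp Sum.inr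
  have ha₁P := ha.congr hP haa₁
  have hbc₁ := (hb.congr hQ ((hb₁ 0).comp Sum.inl)).sumElim (hc.congr hQ ((hc₁ 0).comp Sum.inl))
  have hind : HereditaryInd L M (Sum.elim b₁ c₁) a₁ :=
    (ha₁P.combTreeFree hM hP).hereditaryInd_of_isLimitTuple hM hUinv (hUa.congr haa₁) has ha₁
  refine ⟨a₁, b₁, c₁, ?_, ?_, hbc₁.hereditaryInd_symm hM hQ hP ha₁P hind⟩
  · exact ha₁.tpEq_elim_comp id Sum.inl fun n => (hb₁ n).elim_swap
  · exact ha₁.tpEq_elim_comp id Sum.inr fun n => (hc₁ n).elim_swap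

theorem HereditaryInd.exists_amalgam_of_coheir (hM : SmallModel L M) (hP : IsCoNSOP1Type L M P)
    (hQ : IsCoNSOP1Type L M Q) (ha : IsRealizationTuple L P a) (hb : IsRealizationTuple L Q b)
    (hc : IsRealizationTuple L Q c) (haa' : TpEq L 𝕄 M a a') (hab : HereditaryInd L M a b)
    (hac : HereditaryInd L M a' c) {V : Ultrafilter (γ → 𝕄)} (hV : CoheirUltrafilter M V)
    (hVc : Realizes L V (M ∪ Set.range b) c) :
    ∃ a₂ : α → 𝕄, HereditaryInd L M a₂ (Sum.elim b c) ∧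
      TpEq L 𝕄 M (Sum.elim a₂ b) (Sum.elim a b) ∧ TpEq L 𝕄 M (Sum.elim a₂ c) (Sum.elim a' c) := by
  obtain ⟨a₁, b₁, c₁, hab₁, hac₁, hind⟩ :=
    HereditaryInd.exists_amalgam hM hP hQ ha hb hc haa' hab hac
  obtain ⟨U, hU, rfl, hUbc⟩ := hV.exists_extension hM (c := Sum.elim b₁ c₁) (g := Sum.inr)
    ((hVc.mono Set.subset_union_left).congr (hac₁.comp Sum.inr))
  obtain ⟨d, hd⟩ := exists_isMorleySeq hM U
  obtain ⟨a₀, ha₀⟩ := hind.exists_tpEq hM (hU.invariantUltrafilter (L := L)) hUbc hd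
  have hb₀ (n : ℕ) : TpEq L 𝕄 M (Sum.elim a b) (Sum.elim a₀ (d n ∘ Sum.inl)) :=
    hab₁.trans ((ha₀ n).elim_comp id Sum.inl)
  have hc₀ (n : ℕ) : TpEq L 𝕄 M (Sum.elim a' c) (Sum.elim a₀ (d n ∘ Sum.inr)) :=
    hac₁.trans ((ha₀ n).elim_comp id Sum.inr)
  obtain ⟨W, hW, hes⟩ : ∃ W, CoheirUltrafilter M W ∧ IsMorleySeq L M W fun n =>
      Sum.elim (d (2 * n) ∘ Sum.inl) (d (2 * n + 1) ∘ Sum.inr) :=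
    ⟨_, (hU.tensor hU).map (Sum.map Sum.inl Sum.inr), by
      simpa only [Sum.elim_comp_map] using (hd.tensor_self hU).map (Sum.map Sum.inl Sum.inr)⟩
  have hbc (n : ℕ) : TpEq L 𝕄 M (Sum.elim b c)
      (Sum.elim (d (2 * n) ∘ Sum.inl) (d (2 * n + 1) ∘ Sum.inr)) :=
    hd.tpEq_elim_comp hV.invariantUltrafilter ((hb₀ _).comp Sum.inr) hVc (Nat.lt_succ_self _)
  obtain ⟨e, he⟩ := exists_isLimitTuple_elim hM
    (fun n => Sum.elim (d (2 * n) ∘ Sum.inl) (d (2 * n + 1) ∘ Sum.inr)) a₀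
  have hebc : TpEq L 𝕄 M (Sum.elim b c) e := (he.comp Sum.inl).tpEq hbc
  have hae : HereditaryInd L M a₀ e :=
    (((hb.sumElim hc).congr hQ hebc).combTreeFree hM hQ).hereditaryInd_of_isLimitTuple hM
      hW.invariantUltrafilter
      (((hes 0).mono Set.subset_union_left).congr ((hbc 0).symm.trans hebc)) hes he
  obtain ⟨a₂, ha₂⟩ := hM.exists_tpEq_elim hebc.symm a₀
  refine ⟨a₂, hae.congr ha₂, ?_, ?_⟩
  · exact (ha₂.symm.elim_comp id Sum.inl).trans
      (he.tpEq_elim_comp Sum.inl id fun n => (hb₀ (2 * n)).elim_swap).symm.elim_swap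
  · exact (ha₂.symm.elim_comp id Sum.inr).trans
      (he.tpEq_elim_comp Sum.inr id fun n => (hc₀ (2 * n + 1)).elim_swap).symm.elim_swap

end Amalgamation

/-! ### Conant-independence -/

section Conant

variable {L : FirstOrder.Language.{u, v}} {𝕄 : Type w} [L.Structure 𝕄] {M : Set 𝕄}
variable {α β ξ : Type} {U : Ultrafilter (β → 𝕄)}

theorem TpEq.apply_eq_of_mem {β : Type x} {A : Set 𝕄} {b b' : β → 𝕄} (h : TpEq L 𝕄 A b b') {i : β}
    (hi : b i ∈ A) : b' i = b i :=
  (h.mem_iff (Set.DefinableFun.ofPred_eq_const (Set.DefinableFun.proj L (i := i)) hi)).1 rfl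

theorem IsMorleySeq.famConsistent_iff (hM : SmallModel L M) (hU : InvariantUltrafilter L M U)
    {D : Set (ξ ⊕ β → 𝕄)} (hD : M.Definable L D) {b : ℕ → β → 𝕄} (hb : IsMorleySeq L M U b) :
    FamConsistent (fun n x => Sum.elim x (b n) ∈ D) ↔ MorleyConsistent L M U D := by
  constructor
  · refine fun h => hb.morleyConsistent hM hU hD fun n => (h (Finset.range n)).imp fun x hx => ?_
    simpa using hx
  · intro h s
    obtain ⟨x, hx⟩ := h.consistentAlong_range hb (s.sup id + 1)
    exact ⟨x, fun i hi => hx _ <| List.mem_map_of_mem <| List.mem_range.2 <|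
      Nat.lt_succ_of_le <| Finset.le_sup (f := id) hi⟩

theorem IsMorleySeq.exists_morleyConsistent_of_forall_exists (hM : SmallModel L M)
    (hU : InvariantUltrafilter L M U) {ι : Type*} [Finite ι] {E : ι → Set (ξ ⊕ β → 𝕄)}
    (hE : ∀ j, M.Definable L (E j)) {b : ℕ → β → 𝕄} (hb : IsMorleySeq L M U b) {x : ξ → 𝕄}
    (hx : ∀ n, ∃ j, Sum.elim x (b n) ∈ E j) : ∃ j, MorleyConsistent L M U (E j) := by
  choose J hJ using hx
  obtain ⟨j, hj⟩ := Finite.exists_infinite_fiber J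
  have hinf : (J ⁻¹' {j}).Infinite := Set.infinite_coe_iff.1 hj
  refine ⟨j, ((hb.comp_strictMono (Nat.nth_strictMono hinf)).famConsistent_iff hM hU (hE j)).1
    fun s => ⟨x, fun n _ => ?_⟩⟩
  have hn : J (Nat.nth (· ∈ J ⁻¹' {j}) n) = j := Nat.nth_mem_of_infinite hinf n
  have hmem := hJ (Nat.nth (· ∈ J ⁻¹' {j}) n)
  rwa [hn] at hmem

theorem IndConant.hereditaryInd (hM : SmallModel L M) [Finite α] [Countable β] {a : α → 𝕄}
    {b : β → 𝕄} (hb : CombTreeFree L M b) (hab : IndConant L 𝕄 M (Set.range b) a) :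
    HereditaryInd L M a b := by
  intro D hD habD U hU hUb
  obtain ⟨χ, hχ, rfl⟩ := definable_iff_exists_paramFormula.1 hD
  by_contra hcons
  have hdiv : (χ.subst b).ConantDividesOver M := by
    intro bs hbs₀ hbs hfam
    obtain ⟨W, hW, hbs⟩ := isInvMorleyOver_iff.1 hbs
    have hreal (n : ℕ) : Realizes L W M (bs n) := (hbs n).mono Set.subset_union_left
    have hparams (n : ℕ) : Sum.elim (bs n ∘ Sum.inl) χ.params = bs n := by
      ext (i | i)
      · rfl
      · have hi : bs 0 (Sum.inr i) = χ.params i := congr_fun hbs₀ _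
        have hiM : bs 0 (Sum.inr i) ∈ M := hi ▸ hχ i
        exact ((((hreal 0).tpEq (hreal n)).apply_eq_of_mem hiM).trans hi).symm
    have hWb : Realizes L (W.map (· ∘ Sum.inl)) M b := by
      have hmap := (hreal 0).map Sum.inl
      rwa [hbs₀] at hmap
    refine hcons (hb.morleyConsistent hM (hW.map Sum.inl) hU hWb hUb hD
      (((hbs.map Sum.inl).famConsistent_iff hM (hW.map Sum.inl) hD).1 ?_))
    convert hfam using 3 with n x
    rw [← hparams]
    exact (χ.realize_subst _ x).symm
  refine hab (χ.subst b) ?_ ((χ.realize_subst b a).2 habD)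
    ⟨1, fun _ => χ.subst b, fun _ => hdiv, fun x hx => ⟨0, hx⟩⟩
  exact Sum.rec (fun i => Or.inr ⟨i, rfl⟩) fun i => Or.inl (hχ i)

theorem HereditaryInd.exists_morleyConsistent [Countable α] [Countable β] (hM : SmallModel L M)
    {a : α → 𝕄} {b : β → 𝕄} (hab : HereditaryInd L M a b) {D : Set (α ⊕ β → 𝕄)}
    (hD : M.Definable L D) (habD : Sum.elim a b ∈ D) {γ : Type} {U : Ultrafilter (γ → 𝕄)}
    (hU : InvariantUltrafilter L M U) {c : ℕ → γ → 𝕄} (hc : IsMorleySeq L M U c) {g : β → γ}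
    (hg : c 0 ∘ g = b) {ι : Type*} [Finite ι] {E : ι → Set (α ⊕ γ → 𝕄)}
    (hE : ∀ j, M.Definable L (E j))
    (hDE : ∀ x, Sum.elim x b ∈ D → ∃ j, Sum.elim x (c 0) ∈ E j) :
    ∃ j, MorleyConsistent L M U (E j) := by
  have hreal (n : ℕ) : Realizes L U M (c n) := (hc n).mono Set.subset_union_left
  obtain ⟨x, hx⟩ := MorleyConsistent.exists_forall_mem hM (hc.map g) (F := {D}) (by simpa using hD)
    (Set.singleton_nonempty D) (directedOn_singleton D)
    (by simpa using hab hD habD (hU.map g) (hg ▸ (hreal 0).map g))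
  have hdef : M.Definable L {y : γ → 𝕄 |
      ∀ x : α → 𝕄, Sum.elim x (y ∘ g) ∈ D → ∃ j, Sum.elim x y ∈ E j} := by
    have hunion := ((hD.preimage_comp (Sum.map id g)).compl.union
      (Set.definable_iUnion_of_finite hE)).preimage_comp Sum.swap
    convert definable_forall hunion using 3 with y x
    simp [Sum.elim_comp_map, imp_iff_not_or]
  refine hc.exists_morleyConsistent_of_forall_exists hM hU hE (x := x) fun n => ?_
  exact (((hreal 0).tpEq (hreal n)).mem_iff hdef).1 (by subst hg; exact hDE) x (hx n D rfl)

theorem HereditaryInd.indConant [Countable α] [Countable β] (hM : SmallModel L M) {a : α → 𝕄}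
    {b : β → 𝕄} (hab : HereditaryInd L M a b)
    (hext : ∀ {γ : Type} (e : γ → 𝕄), ∃ c : ℕ → γ → 𝕄, c 0 = e ∧ IsInvMorleyOver L 𝕄 M c) :
    IndConant L 𝕄 M (Set.range b) a := by
  rintro φ hφ haφ ⟨k, ψ, hdiv, hφψ⟩
  obtain ⟨D, hD, hφD⟩ := definable_union_range_iff.1 hφ.definable
  simp only [Set.ext_iff, Set.mem_ofPred_eq] at hφD
  obtain ⟨c, hc₀, hc⟩ := hext (Sum.elim b fun q : Σ j, (ψ j).Params => (ψ q.1).params q.2)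
  obtain ⟨U, hU, hc⟩ := isInvMorleyOver_iff.1 hc
  let g (j : Fin k) (i : (ψ j).Params) : β ⊕ (Σ j, (ψ j).Params) := Sum.inr ⟨j, i⟩
  have hg (j : Fin k) : c 0 ∘ g j = (ψ j).params := by
    rw [hc₀]
    rfl
  have hE (j : Fin k) :=
    (definable_realize (A := M) (ψ j).toFormula).preimage_comp (Sum.map id (g j))
  obtain ⟨j, hj⟩ := hab.exists_morleyConsistent hM hD ((hφD a).1 haφ) hU hc (g := Sum.inl)
    (by rw [hc₀]; rfl) hE fun x hx => (hφψ x ((hφD x).2 hx)).imp fun j hj => by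
      simpa [Sum.elim_comp_map, hg, ParamFormula.Realize] using hj
  refine hdiv j (fun n => c n ∘ g j) (hg j) (isInvMorleyOver_iff.2 ⟨_, hU.map _, hc.map _⟩) ?_
  simpa [Sum.elim_comp_map] using (hc.famConsistent_iff hM hU (hE j)).2 hj

-- Otherwise `⊤`, with `e` as a dummy parameter tuple, Conant-divides over `M` vacuously.
theorem IndConant.exists_isInvMorleyOver {α : Type x} {a : α → 𝕄} {B : Set 𝕄}
    (h : IndConant L 𝕄 M B a) {γ : Type} (e : γ → 𝕄) :
    ∃ c : ℕ → γ → 𝕄, c 0 = e ∧ IsInvMorleyOver L 𝕄 M c := by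
  by_contra! hc
  refine h ⟨Empty, ⊤, Empty.elim⟩ (fun i => i.elim) ?_ ⟨1, fun _ => ⟨γ, ⊤, e⟩,
    fun _ c hc₀ hcM => (hc c hc₀ hcM).elim, fun x _ => ⟨0, ?_⟩⟩ <;>
  simp [ParamFormula.Realize]

end Conant

/-! ### Finite models -/

section FiniteModel

variable {L : FirstOrder.Language.{u, v}} {𝕄 : Type w} [L.Structure 𝕄]

theorem tpEq_univ_iff {β : Type x} {b b' : β → 𝕄} : TpEq L 𝕄 Set.univ b b' ↔ b = b' :=
  ⟨fun h => funext fun _ => (h.apply_eq_of_mem (Set.mem_univ _)).symm, fun h => h ▸ TpEq.refl b⟩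

theorem indConant_univ {α : Type x} (a : α → 𝕄) (B : Set 𝕄) : IndConant L 𝕄 Set.univ B a := by
  rintro φ - ha ⟨k, ψ, hdiv, hφψ⟩
  obtain ⟨j, hj⟩ := hφψ a ha
  refine hdiv j (fun _ => (ψ j).params) rfl
    (isInvMorleyOver_iff.2 ⟨pure (ψ j).params, fun _ _ _ _ _ he => ?_, fun _ _ _ h => h⟩)
    fun s => ⟨a, fun _ _ => hj⟩
  rw [tpEq_univ_iff.1 he]
  exact id

theorem coe_eq_univ_of_finite (M : L.ElementarySubstructure 𝕄) [Finite M] :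
    (M : Set 𝕄) = Set.univ := by
  refine Set.eq_univ_of_forall fun x => ?_
  have : Nonempty 𝕄 := ⟨x⟩
  have : Nonempty M := M.elementarilyEquivalent.symm.nonempty
  have hdef : (M : Set 𝕄).Definable L (⋃ m : M, {y : Unit → 𝕄 | y () = m}) :=
    Set.definable_iUnion_of_finite fun m =>
      Set.DefinableFun.ofPred_eq_const (Set.DefinableFun.proj L) m.2
  by_contra hx
  obtain ⟨y, hy, hyM⟩ := exists_mem_of_elementarySubstructure M hdef.compl
    ⟨fun _ => x, by simpa using fun m hm (h : x = m) => hx (h ▸ hm)⟩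
  exact hy (Set.mem_iUnion.2 ⟨⟨y (), hyM ()⟩, rfl⟩)

end FiniteModel

/-- the weak independence theorem for two co-NSOP₁ types. -/
theorem statement_13
    (L : FirstOrder.Language.{u, v}) (𝕄 : Type w) [L.Structure 𝕄]
    (κ : Cardinal.{w}) [IsMonster L 𝕄 κ]
    (M : L.ElementarySubstructure 𝕄) (hMsmall : Cardinal.mk ↥(M : Set 𝕄) < κ)
    {nv₁ nv₂ : ℕ}
    (P : Set (ParamFormula L 𝕄 (Fin nv₁))) (Q : Set (ParamFormula L 𝕄 (Fin nv₂)))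
    (hPparams : ∀ φ ∈ P, φ.ParamsIn (M : Set 𝕄)) (hQparams : ∀ φ ∈ Q, φ.ParamsIn (M : Set 𝕄))
    (hcoP : CoNSOP1 L 𝕄 (M : Set 𝕄) P) (hcoQ : CoNSOP1 L 𝕄 (M : Set 𝕄) Q)
    {ma mb mc : ℕ}
    (a a' : Fin ma → Fin nv₁ → 𝕄) (b : Fin mb → Fin nv₂ → 𝕄) (c : Fin mc → Fin nv₂ → 𝕄)
    (haP : ∀ j, RealizesPType L 𝕄 P (a j)) (ha'P : ∀ j, RealizesPType L 𝕄 P (a' j))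
    (hbQ : ∀ j, RealizesPType L 𝕄 Q (b j)) (hcQ : ∀ j, RealizesPType L 𝕄 Q (c j))
    (heq : TpEq L 𝕄 (M : Set 𝕄) (flat a) (flat a'))
    (hab : IndConant L 𝕄 (M : Set 𝕄) (Set.range (flat b)) (flat a))
    (ha'c : IndConant L 𝕄 (M : Set 𝕄) (Set.range (flat c)) (flat a'))
    (hcb : IndFinSat L 𝕄 (M : Set 𝕄) (Set.range (flat b)) (flat c)) :
    ∃ a'' : Fin ma → Fin nv₁ → 𝕄,
      IndConant L 𝕄 (M : Set 𝕄) (Set.range (flat b) ∪ Set.range (flat c)) (flat a'') ∧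
      TpEq L 𝕄 ((M : Set 𝕄) ∪ Set.range (flat b)) (flat a'') (flat a) ∧
      TpEq L 𝕄 ((M : Set 𝕄) ∪ Set.range (flat c)) (flat a'') (flat a') := by
  rcases lt_or_ge (Cardinal.mk ↥(M : Set 𝕄)) Cardinal.aleph0 with hfin | hinf
  · have : Finite M := Cardinal.lt_aleph0_iff_finite.1 hfin
    rw [coe_eq_univ_of_finite M] at heq ⊢
    refine ⟨a, indConant_univ _ _, TpEq.refl _, ?_⟩
    rw [tpEq_univ_iff.1 heq]
    exact TpEq.refl _
  · have hM : SmallModel L (M : Set 𝕄) := IsMonster.smallModel M hMsmall hinf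
    have hP : IsCoNSOP1Type L M P := ⟨hPparams, hcoP⟩
    have hQ : IsCoNSOP1Type L M Q := ⟨hQparams, hcoQ⟩
    have ha := isRealizationTuple_flat_of_realizes haP
    have hb := isRealizationTuple_flat_of_realizes hbQ
    have hc := isRealizationTuple_flat_of_realizes hcQ
    have hab' := hab.hereditaryInd hM (hb.combTreeFree hM hQ)
    have hac' := ha'c.hereditaryInd hM (hc.combTreeFree hM hQ)
    obtain ⟨V, hV, hVc⟩ := hcb.exists_coheirUltrafilter
    obtain ⟨a₂, ha₂, hb₂, hc₂⟩ :=
      HereditaryInd.exists_amalgam_of_coheir hM hP hQ ha hb hc heq hab' hac' hV hVc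
    refine ⟨fun i j => a₂ (i, j), ?_, hb₂.over_range, hc₂.over_range⟩
    rw [← Set.Sum.elim_range]
    exact ha₂.indConant hM hab.exists_isInvMorleyOver

end NSOP3Paper
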